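/- arXiv:1410.3997 — 2 statements merged into one kernel-verified Lean document; each statement's English description precedes it below -/
import Mathlib

section
/- Let f : D → D be an area preserving reversible homeomorphism of the closed unit disk D. Then either (i) the set of periodic points of f (points z with f^k(z) = z for some integer k ≥ 1) consists of exactly one point z, and this z lies in the open disk D̊ and satisfies f(z) = z and I(z) = z (i.e., z is an interior symmetric fixed point); or (ii) the set of interior symmetric periodic points of f (points z ∈ D̊ with f^k(z) = z and f^ℓ(z) = I(z) for some integers k, ℓ ≥ 1) is infinite. -/
open MeasureTheory Set

noncomputable section

/-- The reflection `I(x,y) = (-x,y)` on the plane. -/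
def refl2 : ℝ × ℝ → ℝ × ℝ := fun p => (-p.1, p.2)

/-- The Euclidean norm `|z| = √(x² + y²)` on `ℝ²`. -/
def enorm2 (p : ℝ × ℝ) : ℝ := Real.sqrt (p.1 ^ 2 + p.2 ^ 2)

/-- The closed unit disk `D = {z : |z| ≤ 1}`. -/
def disk : Set (ℝ × ℝ) := {p | enorm2 p ≤ 1}

/-- The open unit disk `D̊ = {z : |z| < 1}`, the interior of `D`. -/
def diskInt : Set (ℝ × ℝ) := {p | enorm2 p < 1}

lemma enorm2_refl2 (p : ℝ × ℝ) : enorm2 (refl2 p) = enorm2 p := by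
  simp [enorm2, refl2, neg_sq]

lemma refl2_mem_disk {p : ℝ × ℝ} (h : p ∈ disk) : refl2 p ∈ disk := by
  simpa [disk, enorm2_refl2] using h

/-- The restriction `I_D` of the reflection to the closed disk. -/
def ID : disk → disk := fun z => ⟨refl2 z, refl2_mem_disk z.2⟩

open Filter Topology

/-! ### Continuous logarithms -/

/-- A nowhere vanishing continuous function on a contractible space has a continuous logarithm. -/
lemma exists_continuous_log {A : Type*} [TopologicalSpace A] [ContractibleSpace A]
    {φ : A → ℂ} (hφ : Continuous φ) (h0 : ∀ a, φ a ≠ 0) :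
    ∃ h : A → ℂ, Continuous h ∧ ∀ a, Complex.exp (h a) = φ a := by
  obtain ⟨a₀, ⟨H⟩⟩ := id_nullhomotopic A
  let K := H.symm
  let ψ : C(A, {z : ℂ // z ≠ 0}) := ⟨fun a => ⟨φ a, h0 a⟩, hφ.subtype_mk _⟩
  let G : C(unitInterval × A, {z : ℂ // z ≠ 0}) := ψ.comp K.toContinuousMap
  let c : C(A, ℂ) := ContinuousMap.const A (Complex.log (φ a₀))
  have hG : ∀ a, G (0, a) = (⟨Complex.exp (c a), (c a).exp_ne_zero⟩ : {z : ℂ // z ≠ 0}) := by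
    intro a
    apply Subtype.ext
    simp [G, c, ψ, Complex.exp_log (h0 a₀)]
  let F := Complex.isCoveringMap_exp.liftHomotopy G c hG
  have hF : ∀ t, (⟨Complex.exp (F t), (F t).exp_ne_zero⟩ : {z : ℂ // z ≠ 0}) = G t :=
    fun t => congrFun (Complex.isCoveringMap_exp.liftHomotopy_lifts G c hG) t
  refine ⟨fun a => F (1, a), by fun_prop, fun a => ?_⟩
  have := congrArg Subtype.val (hF (1, a))
  simpa [G, ψ] using this

/-- A nowhere vanishing continuous function on a star-shaped part of the disk has a continuous
logarithm. -/
lemma exists_log_on_starConvex {s : Set disk} {c : ℝ × ℝ}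
    (hs : StarConvex ℝ c (Subtype.val '' s)) (hne : s.Nonempty)
    {φ : disk → ℂ} (hφ : ContinuousOn φ s) (h0 : ∀ z ∈ s, φ z ≠ 0) :
    ∃ h : disk → ℂ, ContinuousOn h s ∧ ∀ z ∈ s, Complex.exp (h z) = φ z := by
  have := hs.contractibleSpace (hne.image _)
  have : ContractibleSpace s :=
    (Topology.IsEmbedding.subtypeVal.homeomorphImage s).contractibleSpace
  obtain ⟨h, hc, he⟩ := exists_continuous_log (φ := s.domRestrict φ)
    (continuousOn_iff_continuous_domRestrict.1 hφ) (fun a => h0 _ a.2)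
  classical
  refine ⟨fun z => if hz : z ∈ s then h ⟨z, hz⟩ else 0, ?_, fun z hz => ?_⟩
  · rw [continuousOn_iff_continuous_domRestrict]
    convert hc with a
    simp
  · simp only [hz, dif_pos]
    exact he ⟨z, hz⟩

/-- A continuous real function with values in `2πℤ` is constant on preconnected sets. -/
lemma IsPreconnected.eq_two_pi_int {X : Type*} [TopologicalSpace X] {s : Set X}
    (hs : IsPreconnected s) {F : X → ℝ} (hF : ContinuousOn F s)
    (hmul : ∀ z ∈ s, ∃ n : ℤ, F z = 2 * Real.pi * n) {x y : X} (hx : x ∈ s) (hy : y ∈ s) :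
    F x = F y := by
  have key : ∀ x ∈ s, ∀ y ∈ s, ¬ F x < F y := by
    intro x hx y hy hlt
    obtain ⟨n, hn⟩ := hmul x hx
    obtain ⟨m, hm⟩ := hmul y hy
    have hpi := Real.pi_pos
    have hnm : n < m := by
      rw [hn, hm] at hlt
      exact_mod_cast (mul_lt_mul_iff_right₀ (by positivity)).1 hlt
    have hnm' : (n : ℝ) + 1 ≤ m := by exact_mod_cast hnm
    have hmem : F x + Real.pi ∈ Icc (F x) (F y) := by
      constructor
      · linarith
      · rw [hn, hm]; nlinarith
    obtain ⟨z, hz, hFz⟩ := hs.intermediate_value hx hy hF hmem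
    obtain ⟨k, hk⟩ := hmul z hz
    rw [hk, hn] at hFz
    have h1 : (2 * k : ℝ) = 2 * n + 1 := by
      apply mul_left_cancel₀ hpi.ne'; linarith
    have h2 : (2 * k : ℤ) = 2 * n + 1 := by exact_mod_cast h1
    omega
  exact le_antisymm (not_lt.1 (key y hy x hx)) (not_lt.1 (key x hx y hy))

/-- Two continuous logarithms of the same function differ by a constant in `2πiℤ` on a
preconnected set. -/
lemma IsPreconnected.exists_eq_two_pi_I {X : Type*} [TopologicalSpace X] {s : Set X}
    (hs : IsPreconnected s) {F : X → ℂ} (hF : ContinuousOn F s)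
    (hexp : ∀ z ∈ s, Complex.exp (F z) = 1) :
    ∃ n : ℤ, ∀ z ∈ s, F z = n * (2 * Real.pi * Complex.I) := by
  rcases s.eq_empty_or_nonempty with rfl | ⟨x, hx⟩
  · exact ⟨0, by simp⟩
  obtain ⟨n, hn⟩ := Complex.exp_eq_one_iff.1 (hexp x hx)
  refine ⟨n, fun z hz => ?_⟩
  obtain ⟨m, hm⟩ := Complex.exp_eq_one_iff.1 (hexp z hz)
  have := hs.eq_two_pi_int (F := fun z => (F z).im)
    (Complex.continuous_im.comp_continuousOn hF) (fun z hz => by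
      obtain ⟨m, hm⟩ := Complex.exp_eq_one_iff.1 (hexp z hz)
      exact ⟨m, by rw [hm]; simp; ring⟩) hx hz
  rw [← hn, Complex.ext_iff]
  exact ⟨by rw [hm, hn]; simp, this.symm⟩

/-! ### The disk and slits in it -/

lemma enorm2_eq_norm (z : ℝ × ℝ) : enorm2 z = ‖Complex.equivRealProdCLM.symm z‖ := by
  rw [enorm2, Complex.norm_def, Complex.normSq_apply]
  congr 1
  simp; ring

lemma disk_eq : disk = Complex.equivRealProdCLM.symm ⁻¹' Metric.closedBall 0 1 := by
  ext z; simp [disk, enorm2_eq_norm]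

lemma diskInt_eq : diskInt = Complex.equivRealProdCLM.symm ⁻¹' Metric.ball 0 1 := by
  ext z; simp [diskInt, enorm2_eq_norm]

lemma mem_disk_iff {z : ℝ × ℝ} : z ∈ disk ↔ z.1 ^ 2 + z.2 ^ 2 ≤ 1 := by
  simp [disk, enorm2]

lemma mem_diskInt_iff {z : ℝ × ℝ} : z ∈ diskInt ↔ z.1 ^ 2 + z.2 ^ 2 < 1 := by
  rw [diskInt, mem_ofPred_eq, enorm2, Real.sqrt_lt' one_pos, one_pow]

lemma diskInt_subset_disk : diskInt ⊆ disk := fun _ hz =>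
  mem_disk_iff.2 (mem_diskInt_iff.1 hz).le

lemma isOpen_diskInt : IsOpen diskInt := by
  rw [diskInt_eq]
  exact Metric.isOpen_ball.preimage Complex.equivRealProdCLM.symm.continuous

lemma convex_disk : Convex ℝ disk := by
  rw [disk_eq]
  exact (convex_closedBall _ _).linear_preimage Complex.equivRealProdCLM.symm.toLinearMap

lemma convex_diskInt : Convex ℝ diskInt := by
  rw [diskInt_eq]
  exact (convex_ball _ _).linear_preimage Complex.equivRealProdCLM.symm.toLinearMap

lemma isCompact_disk : IsCompact disk := by
  rw [disk_eq]
  exact Complex.equivRealProdCLM.symm.toHomeomorph.isCompact_preimage.2 (isCompact_closedBall _ _)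

/-- The interior points of the disk, as points of the disk. -/
def interiorPts : Set disk := {z | (z : ℝ × ℝ) ∈ diskInt}

lemma isOpen_interiorPts : IsOpen interiorPts := isOpen_diskInt.preimage continuous_subtype_val

lemma dense_interiorPts : Dense interiorPts := by
  intro w
  have hc : Continuous fun t : ℝ => t • (w : ℝ × ℝ) := by fun_prop
  have ht : Tendsto (fun t : ℝ => t • (w : ℝ × ℝ)) (𝓝[Ioo 0 1] 1) (𝓝 w) := by
    have := hc.tendsto 1
    rw [one_smul] at this
    exact this.mono_left nhdsWithin_le_nhds
  rw [closure_subtype]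
  have : (𝓝[Ioo (0 : ℝ) 1] 1).NeBot := right_nhdsWithin_Ioo_neBot one_pos
  refine mem_closure_of_tendsto ht ?_
  filter_upwards [self_mem_nhdsWithin] with t ht
  have hw := mem_disk_iff.1 w.2
  have hmem : t • (w : ℝ × ℝ) ∈ diskInt := by
    rw [mem_diskInt_iff]
    simp only [Prod.smul_fst, Prod.smul_snd, smul_eq_mul]
    nlinarith [ht.1, ht.2, mul_pos ht.1 ht.1]
  exact ⟨⟨_, diskInt_subset_disk hmem⟩, hmem, rfl⟩

/-- Points of an open set of interior points can be moved horizontally in both directions. -/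
lemma exists_shift {U : Set disk} (hU : IsOpen U) {z : disk} (hz : z ∈ U) (hi : z ∈ interiorPts) :
    ∃ t : ℝ, 0 < t ∧ ∀ s, |s| = t → ∃ y ∈ U, y ∈ interiorPts ∧
      (y : ℝ × ℝ) = ((z : ℝ × ℝ).1 + s, (z : ℝ × ℝ).2) := by
  obtain ⟨V, hV, rfl⟩ := isOpen_induced_iff.1 hU
  have hc : Continuous fun s : ℝ => (((z : ℝ × ℝ).1 + s, (z : ℝ × ℝ).2) : ℝ × ℝ) := by fun_prop
  have hO : IsOpen ((fun s : ℝ => (((z : ℝ × ℝ).1 + s, (z : ℝ × ℝ).2) : ℝ × ℝ)) ⁻¹'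
    (V ∩ diskInt)) := (hV.inter isOpen_diskInt).preimage hc
  obtain ⟨ε, hε, hball⟩ := Metric.isOpen_iff.1 hO 0 (by simpa using ⟨hz, hi⟩)
  refine ⟨ε / 2, by positivity, fun s hs => ?_⟩
  have hmem := hball (show s ∈ Metric.ball 0 ε by simp [hs]; linarith)
  exact ⟨⟨_, diskInt_subset_disk hmem.2⟩, hmem.1, hmem.2, rfl⟩

/-- The plane coordinate centred at `p` in which the vertical ray issuing from `p` in the
direction `-σ` becomes the negative real axis. -/
def slitCoord (σ : ℝ) (p z : ℝ × ℝ) : ℂ := ⟨σ * (z.2 - p.2), z.1 - p.1⟩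

@[fun_prop]
lemma continuous_slitCoord (σ : ℝ) (p : ℝ × ℝ) : Continuous (slitCoord σ p) := by
  have : slitCoord σ p =
      fun z => ((σ * (z.2 - p.2) : ℝ) : ℂ) + ((z.1 - p.1 : ℝ) : ℂ) * Complex.I := by
    ext z; simp [slitCoord, Complex.ext_iff]
  rw [this]; fun_prop

lemma slitCoord_eq_zero {σ : ℝ} (hσ : σ ^ 2 = 1) {p z : ℝ × ℝ} : slitCoord σ p z = 0 ↔ z = p := by
  have : σ ≠ 0 := by rintro rfl; norm_num at hσ
  simp only [slitCoord, Complex.ext_iff, Complex.zero_re, Complex.zero_im, mul_eq_zero, this,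
    false_or, sub_eq_zero, Prod.ext_iff]
  tauto

/-- The disk slit along the ray from `p` in the direction `-σ`. -/
def slitDisk (σ : ℝ) (p : ℝ × ℝ) : Set disk := {z | slitCoord σ p z ∈ Complex.slitPlane}

lemma isOpen_slitDisk (σ : ℝ) (p : ℝ × ℝ) : IsOpen (slitDisk σ p) :=
  Complex.isOpen_slitPlane.preimage (by fun_prop)

lemma exists_center {σ : ℝ} (hσ : σ ^ 2 = 1) {p : ℝ × ℝ} (hp : p ∈ diskInt) :
    ∃ c ∈ diskInt, c.1 = p.1 ∧ 0 < σ * (c.2 - p.2) := by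
  have hc : Continuous fun s : ℝ => ((p.1, p.2 + σ * s) : ℝ × ℝ) := by fun_prop
  obtain ⟨ε, hε, hball⟩ := Metric.isOpen_iff.1 (isOpen_diskInt.preimage hc) 0 (by simpa using hp)
  have := hball (show ε / 2 ∈ Metric.ball 0 ε by
    rw [Metric.mem_ball, Real.dist_eq, sub_zero, abs_of_pos (half_pos hε)]; exact half_lt_self hε)
  refine ⟨_, this, rfl, ?_⟩
  have : σ * (p.2 + σ * (ε / 2) - p.2) = σ ^ 2 * (ε / 2) := by ring
  rw [this, hσ]; linarith

lemma starConvex_slit {σ : ℝ} {p c : ℝ × ℝ} (hc1 : c.1 = p.1)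
    (hc2 : 0 < σ * (c.2 - p.2)) :
    StarConvex ℝ c {z | slitCoord σ p z ∈ Complex.slitPlane} := by
  intro z hz a b ha hb hab
  simp only [mem_ofPred_eq, slitCoord, Complex.mem_slitPlane_iff, Prod.fst_add, Prod.snd_add,
    Prod.smul_fst, Prod.smul_snd, smul_eq_mul] at hz ⊢
  have e1 : a * c.1 + b * z.1 - p.1 = b * (z.1 - p.1) := by
    rw [hc1]; linear_combination (p.1) * hab
  have e2 : σ * (a * c.2 + b * z.2 - p.2) = a * (σ * (c.2 - p.2)) + b * (σ * (z.2 - p.2)) := by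
    linear_combination (σ * p.2) * hab
  rw [e1, e2]
  rcases hb.eq_or_lt with rfl | hb
  · left; simp at hab; subst hab; simpa using hc2
  · rcases hz with hz | hz
    · left; have := mul_nonneg ha hc2.le; have := mul_pos hb hz; linarith
    · right; exact mul_ne_zero hb.ne' hz

lemma image_val_setOf (P : ℝ × ℝ → Prop) :
    (Subtype.val '' {z : disk | P z}) = disk ∩ {z | P z} := by
  ext z
  constructor
  · rintro ⟨y, hy, rfl⟩
    exact ⟨y.2, hy⟩
  · rintro ⟨hz, hz'⟩
    exact ⟨⟨z, hz⟩, hz', rfl⟩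

lemma starConvex_slitDisk {σ : ℝ} (hσ : σ ^ 2 = 1) {p : ℝ × ℝ} (hp : p ∈ diskInt) :
    ∃ c : disk, c ∈ slitDisk σ p ∧ StarConvex ℝ (c : ℝ × ℝ) (Subtype.val '' slitDisk σ p) := by
  obtain ⟨c, hc, h1, h2⟩ := exists_center hσ hp
  refine ⟨⟨c, diskInt_subset_disk hc⟩, Or.inl h2, ?_⟩
  rw [slitDisk, image_val_setOf fun z => slitCoord σ p z ∈ Complex.slitPlane]
  exact (convex_disk.starConvex (diskInt_subset_disk hc)).inter (starConvex_slit h1 h2)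

lemma isPreconnected_of_image_val {s : Set disk} (h : IsPreconnected (Subtype.val '' s)) :
    IsPreconnected s :=
  Topology.IsInducing.subtypeVal.isPreconnected_image.1 h

lemma isPreconnected_slitDisk {σ : ℝ} (hσ : σ ^ 2 = 1) {p : ℝ × ℝ} (hp : p ∈ diskInt) :
    IsPreconnected (slitDisk σ p) := by
  obtain ⟨c, hc, hstar⟩ := starConvex_slitDisk hσ hp
  exact isPreconnected_of_image_val
    (hstar.isPathConnected (mem_image_of_mem _ hc)).isConnected.isPreconnected

lemma isPreconnected_interiorPts_inter_slitDisk {σ : ℝ} (hσ : σ ^ 2 = 1) {p : ℝ × ℝ}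
    (hp : p ∈ diskInt) : IsPreconnected (interiorPts ∩ slitDisk σ p) := by
  obtain ⟨c, hc, h1, h2⟩ := exists_center hσ hp
  apply isPreconnected_of_image_val
  have : (Subtype.val '' (interiorPts ∩ slitDisk σ p)) =
      diskInt ∩ {z | slitCoord σ p z ∈ Complex.slitPlane} := by
    ext z
    constructor
    · rintro ⟨y, ⟨hy, hy'⟩, rfl⟩
      exact ⟨hy, hy'⟩
    · rintro ⟨hz, hz'⟩
      exact ⟨⟨z, diskInt_subset_disk hz⟩, ⟨hz, hz'⟩, rfl⟩
  rw [this]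
  have hne : c ∈ diskInt ∩ {z | slitCoord σ p z ∈ Complex.slitPlane} := ⟨hc, Or.inl h2⟩
  exact (((convex_diskInt.starConvex hc).inter (starConvex_slit h1 h2)).isPathConnected
    hne).isConnected.isPreconnected

lemma isPreconnected_of_convex {P : ℝ × ℝ → Prop} (h : Convex ℝ {z | P z}) :
    IsPreconnected {z : disk | P z} := by
  apply isPreconnected_of_image_val
  rw [image_val_setOf P]
  exact (convex_disk.inter h).isPreconnected

/-! ### Degrees around an interior point -/

lemma slitCoord_re (σ : ℝ) (p z : ℝ × ℝ) : (slitCoord σ p z).re = σ * (z.2 - p.2) := rfl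

lemma slitCoord_im (σ : ℝ) (p z : ℝ × ℝ) : (slitCoord σ p z).im = z.1 - p.1 := rfl

lemma mem_slitDisk_neg {σ : ℝ} {p : ℝ × ℝ} {z : disk} :
    z ∈ slitDisk (-σ) p ↔ -slitCoord σ p z ∈ Complex.slitPlane := by
  change slitCoord (-σ) p z ∈ Complex.slitPlane ↔ _
  simp only [Complex.mem_slitPlane_iff, slitCoord_re, slitCoord_im, Complex.neg_re, Complex.neg_im,
    neg_mul, ne_eq, neg_eq_zero]

lemma mem_slitDisk_or_neg {σ : ℝ} (hσ : σ ^ 2 = 1) {p : ℝ × ℝ} {z : disk}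
    (hz : (z : ℝ × ℝ) ≠ p) : z ∈ slitDisk σ p ∨ z ∈ slitDisk (-σ) p := by
  rw [mem_slitDisk_neg]
  change slitCoord σ p z ∈ Complex.slitPlane ∨ _
  have : slitCoord σ p z ≠ 0 := fun h => hz ((slitCoord_eq_zero hσ).1 h)
  simp only [Complex.mem_slitPlane_iff, Complex.neg_re, Complex.neg_im]
  by_contra! hcon
  exact this (Complex.ext (by simp; linarith [hcon.1.1, hcon.2.1]) hcon.1.2)

lemma ne_of_mem_slitDisk {σ : ℝ} {p : ℝ × ℝ} {z : disk} (hz : z ∈ slitDisk σ p) :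
    (z : ℝ × ℝ) ≠ p := by
  rintro rfl
  have := Complex.slitPlane_ne_zero hz
  simp [slitCoord, Complex.ext_iff] at this

lemma Complex.log_neg_of_im_pos {x : ℂ} (hx : 0 < x.im) :
    Complex.log (-x) = Complex.log x - Real.pi * Complex.I := by
  apply Complex.ext <;>
    simp [Complex.log_re, Complex.log_im, Complex.arg_neg_eq_arg_sub_pi_of_im_pos hx]

lemma Complex.log_neg_of_im_neg {x : ℂ} (hx : x.im < 0) :
    Complex.log (-x) = Complex.log x + Real.pi * Complex.I := by
  apply Complex.ext <;>
    simp [Complex.log_re, Complex.log_im, Complex.arg_neg_eq_arg_add_pi_of_im_neg hx]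

lemma isPreconnected_fst_gt (c : ℝ) : IsPreconnected {z : disk | c < (z : ℝ × ℝ).1} :=
  isPreconnected_of_convex (P := fun z => c < z.1)
    (convex_halfSpace_gt (LinearMap.fst ℝ ℝ ℝ).isLinear c)

lemma isPreconnected_fst_lt (c : ℝ) : IsPreconnected {z : disk | (z : ℝ × ℝ).1 < c} :=
  isPreconnected_of_convex (P := fun z => z.1 < c)
    (convex_halfSpace_lt (LinearMap.fst ℝ ℝ ℝ).isLinear c)

/-- A nowhere vanishing function on the disk punctured at an interior point `p` has a degree
around `p`. -/
lemma exists_degree {σ : ℝ} (hσ : σ ^ 2 = 1) {p : ℝ × ℝ} (hp : p ∈ diskInt) {φ : disk → ℂ}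
    (hφ : ContinuousOn φ {z | (z : ℝ × ℝ) ≠ p}) (h0 : ∀ z : disk, (z : ℝ × ℝ) ≠ p → φ z ≠ 0) :
    ∃ (d : ℤ) (h : disk → ℂ), ContinuousOn h {z | (z : ℝ × ℝ) ≠ p} ∧
      ∀ z : disk, (z : ℝ × ℝ) ≠ p → φ z = slitCoord σ p z ^ d * Complex.exp (h z) := by
  have hσ' : (-σ) ^ 2 = 1 := by rw [neg_sq, hσ]
  have hlog : ∀ τ : ℝ, τ ^ 2 = 1 → ∃ α : disk → ℂ, ContinuousOn α (slitDisk τ p) ∧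
      ∀ z ∈ slitDisk τ p, Complex.exp (α z) = φ z := fun τ hτ => by
    obtain ⟨c, hc, hstar⟩ := starConvex_slitDisk hτ hp
    exact exists_log_on_starConvex hstar ⟨c, hc⟩
      (hφ.mono fun z hz => ne_of_mem_slitDisk hz) (fun z hz => h0 z (ne_of_mem_slitDisk hz))
  obtain ⟨α, hαc, hα⟩ := hlog σ hσ
  obtain ⟨β, hβc, hβ⟩ := hlog (-σ) hσ'
  have hside : ∀ s : Set disk, IsPreconnected s → (∀ z ∈ s, (slitCoord σ p z).im ≠ 0) →
      ∃ m : ℤ, ∀ z ∈ s, α z - β z = m * (2 * Real.pi * Complex.I) := by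
    intro s hs him
    have h1 : s ⊆ slitDisk σ p := fun z hz => Or.inr (him z hz)
    have h2 : s ⊆ slitDisk (-σ) p := fun z hz => Or.inr (him z hz)
    refine hs.exists_eq_two_pi_I ((hαc.mono h1).sub (hβc.mono h2)) fun z hz => ?_
    rw [Complex.exp_sub, hα z (h1 hz), hβ z (h2 hz), div_self (h0 z (ne_of_mem_slitDisk (h1 hz)))]
  obtain ⟨m, hm⟩ := hside _ (isPreconnected_fst_gt p.1) fun z hz => (sub_pos.2 hz).ne'
  obtain ⟨n, hn⟩ := hside _ (isPreconnected_fst_lt p.1) fun z hz => (sub_neg.2 hz).ne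
  classical
  let h₁ : disk → ℂ := fun z => α z - (m - n : ℤ) * Complex.log (slitCoord σ p z)
  let h₂ : disk → ℂ := fun z => β z - (m - n : ℤ) * Complex.log (-slitCoord σ p z) +
    ((m - n : ℤ) * (Real.pi * Complex.I) + n * (2 * Real.pi * Complex.I))
  let h : disk → ℂ := fun z => if z ∈ slitDisk σ p then h₁ z else h₂ z
  have hh₁ : ∀ z ∈ slitDisk σ p, h z = h₁ z := fun z hz => if_pos hz
  have hh₂ : ∀ z ∈ slitDisk (-σ) p, h z = h₂ z := by
    intro z hz
    by_cases hz' : z ∈ slitDisk σ p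
    · rw [hh₁ z hz']
      have him : (slitCoord σ p z).im ≠ 0 := by
        intro him
        rcases hz with hz | hz
        · rcases hz' with hz' | hz'
          · rw [slitCoord_re] at hz hz'; linarith
          · exact hz' him
        · exact hz him
      rcases lt_or_gt_of_ne him with him | him
      · have := hn z (sub_neg.1 him)
        simp only [h₁, h₂, Complex.log_neg_of_im_neg him]
        linear_combination this
      · have := hm z (sub_pos.1 him)
        simp only [h₁, h₂, Complex.log_neg_of_im_pos him]
        push_cast
        linear_combination this
    · exact if_neg hz'
  have hcoord : Continuous fun z : disk => slitCoord σ p z := by fun_prop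
  refine ⟨m - n, h, fun z hz => ContinuousAt.continuousWithinAt ?_, fun z hz => ?_⟩
  · rcases mem_slitDisk_or_neg hσ hz with hz | hz
    · have hn := (isOpen_slitDisk σ p).mem_nhds hz
      refine ContinuousAt.congr ?_ (eventually_of_mem hn fun y hy => (hh₁ y hy).symm)
      exact (hαc.continuousAt hn).sub (continuousAt_const.mul (hcoord.continuousAt.clog hz))
    · have hn := (isOpen_slitDisk (-σ) p).mem_nhds hz
      refine ContinuousAt.congr ?_ (eventually_of_mem hn fun y hy => (hh₂ y hy).symm)
      exact ((hβc.continuousAt hn).sub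
        (continuousAt_const.mul (hcoord.neg.continuousAt.clog (mem_slitDisk_neg.1 hz)))).add
        continuousAt_const
  · have hne : slitCoord σ p z ≠ 0 := fun h => hz ((slitCoord_eq_zero hσ).1 h)
    rcases mem_slitDisk_or_neg hσ hz with hz | hz
    · rw [hh₁ z hz, Complex.exp_sub, Complex.exp_int_mul, Complex.exp_log hne, hα z hz]
      field_simp
    · have hne' : (-slitCoord σ p z) ≠ 0 := neg_ne_zero.2 hne
      rw [hh₂ z hz, Complex.exp_add, Complex.exp_sub, Complex.exp_add, Complex.exp_int_mul,
        Complex.exp_int_mul, Complex.exp_log hne', hβ z hz, Complex.exp_pi_mul_I,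
        Complex.exp_int_mul_two_pi_mul_I, neg_eq_neg_one_mul, mul_zpow]
      have : (-1 : ℂ) ^ (m - n) ≠ 0 := zpow_ne_zero _ (by norm_num)
      field_simp

/-- The coordinate centred at `p` has degree one: its nontrivial powers have no logarithm. -/
lemma eq_zero_of_zpow_eq_exp {σ : ℝ} (hσ : σ ^ 2 = 1) {p : ℝ × ℝ} (hp : p ∈ diskInt) {n : ℤ}
    {h : disk → ℂ} (hc : ContinuousOn h {z | (z : ℝ × ℝ) ≠ p})
    (hexp : ∀ z : disk, (z : ℝ × ℝ) ≠ p → slitCoord σ p z ^ n = Complex.exp (h z)) : n = 0 := by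
  have hσ' : (-σ) ^ 2 = 1 := by rw [neg_sq, hσ]
  have hcoord : Continuous fun z : disk => slitCoord σ p z := by fun_prop
  obtain ⟨m, hm⟩ := (isPreconnected_slitDisk hσ hp).exists_eq_two_pi_I
    (F := fun z => n * Complex.log (slitCoord σ p z) - h z)
    ((continuousOn_const.mul (hcoord.continuousOn.clog fun z hz => hz)).sub
      (hc.mono fun z hz => ne_of_mem_slitDisk hz)) (fun z hz => by
        rw [Complex.exp_sub, ← hexp z (ne_of_mem_slitDisk hz), Complex.exp_int_mul,
          Complex.exp_log (Complex.slitPlane_ne_zero hz), div_self]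
        exact zpow_ne_zero _ (Complex.slitPlane_ne_zero hz))
  obtain ⟨c, hcint, hc1, hc2⟩ := exists_center hσ' hp
  let z : disk := ⟨c, diskInt_subset_disk hcint⟩
  have hzp : (z : ℝ × ℝ) ≠ p := by intro h; rw [← h] at hc2; simp [z] at hc2
  have hre : (slitCoord σ p z).re < 0 := by
    rw [slitCoord_re]; change σ * (c.2 - p.2) < 0; linarith
  have him : (slitCoord σ p z).im = 0 := sub_eq_zero.2 hc1
  have hside : ∀ s : Set disk, (∀ y ∈ s, y ∈ slitDisk σ p) → z ∈ closure s → ∀ L : ℂ,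
      Tendsto (fun y : disk => Complex.log (slitCoord σ p y)) (𝓝[s] z) (𝓝 L) →
      n * L - h z = m * (2 * Real.pi * Complex.I) := by
    intro s hs hz L hL
    have : (𝓝[s] z).NeBot := mem_closure_iff_nhdsWithin_neBot.1 hz
    have hh : Tendsto h (𝓝[s] z) (𝓝 (h z)) :=
      (hc z hzp).mono_left (nhdsWithin_mono _ fun y hy => ne_of_mem_slitDisk (hs y hy))
    refine tendsto_nhds_unique ((tendsto_const_nhds.mul hL).sub hh) ?_
    exact tendsto_const_nhds.congr' (eventually_of_mem self_mem_nhdsWithin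
      fun y hy => (hm y (hs y hy)).symm)
  have hpos := hside {y | 0 < (slitCoord σ p y).im} (fun y hy => Or.inr (ne_of_gt hy)) (by
      rw [mem_closure_iff]
      intro o ho hzo
      obtain ⟨t, ht, hs⟩ := exists_shift ho hzo hcint
      obtain ⟨y, hy, -, hyv⟩ := hs t (abs_of_pos ht)
      refine ⟨y, hy, ?_⟩
      simp [slitCoord_im, hyv, z, hc1, ht]) _
    ((Complex.tendsto_log_nhdsWithin_im_nonneg_of_re_neg_of_im_zero hre him).comp
      (tendsto_nhdsWithin_iff.2 ⟨(hcoord.tendsto z).mono_left nhdsWithin_le_nhds,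
        eventually_of_mem self_mem_nhdsWithin fun y hy =>
          show 0 ≤ (slitCoord σ p y).im from (show 0 < (slitCoord σ p y).im from hy).le⟩))
  have hneg := hside {y | (slitCoord σ p y).im < 0} (fun y hy => Or.inr (ne_of_lt hy)) (by
      rw [mem_closure_iff]
      intro o ho hzo
      obtain ⟨t, ht, hs⟩ := exists_shift ho hzo hcint
      obtain ⟨y, hy, -, hyv⟩ := hs (-t) (by rw [abs_neg, abs_of_pos ht])
      refine ⟨y, hy, ?_⟩
      simp [slitCoord_im, hyv, z, hc1, ht]) _
    ((Complex.tendsto_log_nhdsWithin_im_neg_of_re_neg_of_im_zero hre him).comp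
      (tendsto_nhdsWithin_iff.2 ⟨(hcoord.tendsto z).mono_left nhdsWithin_le_nhds,
        self_mem_nhdsWithin⟩))
  have : (n : ℂ) * (2 * Real.pi * Complex.I) = 0 := by linear_combination hpos - hneg
  rcases mul_eq_zero.1 this with h | h
  · exact_mod_cast h
  · exact absurd h Complex.two_pi_I_ne_zero

/-- The punctured disk at a boundary point is star-shaped about the centre. -/
lemma starConvex_compl_boundary {w : disk} (hw : w ∉ interiorPts) :
    StarConvex ℝ (0 : ℝ × ℝ) (Subtype.val '' {w}ᶜ) := by
  rintro _ ⟨y, hy, rfl⟩ a b ha hb hab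
  have hdisk : a • (0 : ℝ × ℝ) + b • (y : ℝ × ℝ) ∈ disk :=
    convex_disk (mem_disk_iff.2 (by simp)) y.2 ha hb hab
  refine ⟨⟨_, hdisk⟩, fun heq => hy ?_, rfl⟩
  have hw1 : ¬ ((w : ℝ × ℝ).1 ^ 2 + (w : ℝ × ℝ).2 ^ 2 < 1) := fun h => hw (mem_diskInt_iff.2 h)
  have hval : a • (0 : ℝ × ℝ) + b • (y : ℝ × ℝ) = w := congrArg Subtype.val heq
  have hy1 := mem_disk_iff.1 y.2
  have hb1 : b = 1 := by
    by_contra hne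
    have hlt : b < 1 := lt_of_le_of_ne (by linarith) hne
    apply hw1
    rw [← hval]
    simp only [smul_zero, zero_add, Prod.smul_fst, Prod.smul_snd, smul_eq_mul]
    have hb2 : b ^ 2 < 1 := by nlinarith
    nlinarith [mul_le_mul_of_nonneg_left hy1 (sq_nonneg b)]
  rw [hb1, smul_zero, zero_add, one_smul] at hval
  exact Subtype.ext hval

/-- Homeomorphisms of the disk preserve its interior. -/
lemma Homeomorph.map_mem_interiorPts (f : disk ≃ₜ disk) {z : disk} (hz : z ∈ interiorPts) :
    f z ∈ interiorPts := by
  by_contra hw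
  have hone : (1 : ℝ) ^ 2 = 1 := one_pow 2
  have h0mem : (0 : ℝ × ℝ) ∈ disk := mem_disk_iff.2 (by simp)
  have hne : ({f z}ᶜ : Set disk).Nonempty := by
    refine ⟨⟨0, h0mem⟩, fun h => hw ?_⟩
    rw [← mem_singleton_iff.1 h]
    exact mem_diskInt_iff.2 (by simp)
  have hcont : Continuous fun u : disk => slitCoord 1 z (f.symm u) := by fun_prop
  obtain ⟨H, hH, hexp⟩ := exists_log_on_starConvex (starConvex_compl_boundary hw) hne
    hcont.continuousOn (fun u hu h => hu (by
      rw [mem_singleton_iff, ← Subtype.ext ((slitCoord_eq_zero hone).1 h), f.apply_symm_apply]))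
  have hmaps : ∀ y : disk, (y : ℝ × ℝ) ≠ z → f y ∈ ({f z}ᶜ : Set disk) := fun y hy h =>
    hy (congrArg Subtype.val (f.injective h))
  refine one_ne_zero (eq_zero_of_zpow_eq_exp hone hz (n := 1) (h := fun y => H (f y))
    (hH.comp f.continuous.continuousOn hmaps) fun y hy => ?_)
  rw [hexp _ (hmaps y hy), f.symm_apply_apply, zpow_one]

/-- The square of a homeomorphism fixing an interior point `p` has degree one around `p`. -/
lemma Homeomorph.exists_log_sq {σ : ℝ} (hσ : σ ^ 2 = 1) (e : disk ≃ₜ disk) {p : disk}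
    (hp : p ∈ interiorPts) (hep : e p = p) :
    ∃ η : disk → ℂ, ContinuousOn η {z | (z : ℝ × ℝ) ≠ p} ∧ ∀ z : disk, (z : ℝ × ℝ) ≠ p →
      slitCoord σ p (e (e z)) = slitCoord σ p z * Complex.exp (η z) := by
  have hdeg : ∀ e' : disk ≃ₜ disk, e' p = p →
      (∀ z : disk, (z : ℝ × ℝ) ≠ p → (e' z : ℝ × ℝ) ≠ p) ∧
      ∃ (d : ℤ) (h : disk → ℂ), ContinuousOn h {z | (z : ℝ × ℝ) ≠ p} ∧
      ∀ z : disk, (z : ℝ × ℝ) ≠ p →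
        slitCoord σ p (e' z) = slitCoord σ p z ^ d * Complex.exp (h z) := by
    intro e' he'
    have hmap : ∀ z : disk, (z : ℝ × ℝ) ≠ p → (e' z : ℝ × ℝ) ≠ p := fun z hz h =>
      hz (congrArg Subtype.val (e'.injective ((Subtype.ext h).trans he'.symm)))
    have hcont : Continuous fun u : disk => slitCoord σ p (e' u) := by fun_prop
    exact ⟨hmap, exists_degree hσ hp hcont.continuousOn
      fun z hz h => hmap z hz ((slitCoord_eq_zero hσ).1 h)⟩
  obtain ⟨hm, d, h, hc, hd⟩ := hdeg e hep
  obtain ⟨hm', d', h', hc', hd'⟩ := hdeg e.symm (by rw [e.symm_apply_eq, hep])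
  have hdd : 1 - d' * d = 0 := by
    refine eq_zero_of_zpow_eq_exp hσ hp (h := fun z => d * h' z + h (e.symm z))
      ((continuousOn_const.mul hc').add (hc.comp e.symm.continuous.continuousOn hm'))
      fun z hz => ?_
    have hne : slitCoord σ p z ≠ 0 := fun h => hz ((slitCoord_eq_zero hσ).1 h)
    have := hd _ (hm' z hz)
    rw [e.apply_symm_apply, hd' z hz, mul_zpow, ← zpow_mul, ← Complex.exp_int_mul, mul_assoc,
      ← Complex.exp_add] at this
    rw [zpow_sub₀ hne, zpow_one, div_eq_iff (zpow_ne_zero _ hne), mul_comm]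
    exact this
  have hd2 : d * d = 1 := by
    rcases Int.isUnit_iff.1 (IsUnit.of_mul_eq_one d' (by linarith : d * d' = 1)) with h | h <;>
      simp [h]
  refine ⟨fun z => d * h z + h (e z),
    (continuousOn_const.mul hc).add (hc.comp e.continuous.continuousOn hm), fun z hz => ?_⟩
  rw [hd _ (hm z hz), hd z hz, mul_zpow, ← zpow_mul, ← Complex.exp_int_mul, mul_assoc,
    ← Complex.exp_add, hd2, zpow_one]

/-! ### Area -/

/-- The area measure of the disk. -/
def diskArea : Measure disk := (volume : Measure (ℝ × ℝ)).comap (Subtype.val : disk → ℝ × ℝ)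

lemma measurableSet_disk : MeasurableSet disk := isCompact_disk.measurableSet

lemma diskArea_apply (s : Set disk) : diskArea s = volume (Subtype.val '' s) :=
  comap_subtype_coe_apply measurableSet_disk _ s

instance isFiniteMeasure_diskArea : IsFiniteMeasure diskArea := by
  refine ⟨?_⟩
  rw [diskArea_apply]
  exact (measure_mono (by rintro _ ⟨y, -, rfl⟩; exact y.2)).trans_lt isCompact_disk.measure_lt_top

lemma diskArea_ne_zero {U : Set disk} (hU : IsOpen U) (hne : U.Nonempty) : diskArea U ≠ 0 := by
  obtain ⟨y, hyU, hyi⟩ := dense_interiorPts.inter_open_nonempty U hU hne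
  obtain ⟨V, hV, rfl⟩ := isOpen_induced_iff.1 hU
  have hpos := (hV.inter isOpen_diskInt).measure_pos volume ⟨y, hyU, hyi⟩
  rw [diskArea_apply]
  refine (hpos.trans_le (measure_mono ?_)).ne'
  rintro z ⟨hz, hz'⟩
  exact ⟨⟨z, diskInt_subset_disk hz'⟩, hz, rfl⟩

lemma diskArea_vertical (c : ℝ) : diskArea {z | (z : ℝ × ℝ).1 = c} = 0 := by
  rw [diskArea_apply]
  refine measure_mono_null (t := {c} ×ˢ univ) ?_ ?_
  · rintro _ ⟨z, hz, rfl⟩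
    exact ⟨hz, mem_univ _⟩
  · rw [Measure.volume_eq_prod, Measure.prod_prod, Real.volume_singleton, zero_mul]

lemma diskArea_compl_slitDisk (σ : ℝ) (p : ℝ × ℝ) : diskArea (slitDisk σ p)ᶜ = 0 := by
  refine measure_mono_null (fun z hz => ?_) (diskArea_vertical p.1)
  by_contra hne
  exact hz (Or.inr (sub_ne_zero.2 hne))

/-! ### Rotation around a fixed point -/

/-- The difference between the principal argument of `G z` minus that of `z` and the angle
prescribed by `S`. -/
def angleDefect (σ : ℝ) (p : ℝ × ℝ) (G : disk → disk) (S : disk → ℂ) (z : disk) : ℝ :=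
  Complex.arg (slitCoord σ p (G z)) - Complex.arg (slitCoord σ p z) - (S z).im

lemma exists_angleDefect_eq {σ : ℝ} (hσ : σ ^ 2 = 1) {p : ℝ × ℝ} {G : disk → disk} {S : disk → ℂ}
    {z : disk} (hz : (z : ℝ × ℝ) ≠ p)
    (hS : slitCoord σ p (G z) = slitCoord σ p z * Complex.exp (S z)) :
    ∃ n : ℤ, angleDefect σ p G S z = 2 * Real.pi * n := by
  have hne : slitCoord σ p z ≠ 0 := fun h => hz ((slitCoord_eq_zero hσ).1 h)
  have hne' : slitCoord σ p (G z) ≠ 0 := by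
    rw [hS]; exact mul_ne_zero hne (Complex.exp_ne_zero _)
  have hexp : Complex.exp (Complex.log (slitCoord σ p (G z)) - Complex.log (slitCoord σ p z) -
      S z) = 1 := by
    rw [Complex.exp_sub, Complex.exp_sub, Complex.exp_log hne, Complex.exp_log hne', hS]
    field_simp
  obtain ⟨n, hn⟩ := Complex.exp_eq_one_iff.1 hexp
  refine ⟨n, ?_⟩
  have := congrArg Complex.im hn
  simp only [Complex.sub_im, Complex.log_im] at this
  rw [angleDefect, this]
  simp; ring

/-- A function with values in `2πℤ` is locally constant at points of continuity. -/
lemma eventually_eq_of_two_pi_int {X : Type*} [TopologicalSpace X] {F : X → ℝ} {x : X}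
    (hF : ContinuousAt F x) (hmul : ∀ᶠ y in 𝓝 x, ∃ n : ℤ, F y = 2 * Real.pi * n) :
    ∀ᶠ y in 𝓝 x, F y = F x := by
  obtain ⟨m, hm⟩ := hmul.self_of_nhds
  filter_upwards [hmul, Metric.tendsto_nhds.1 hF Real.pi Real.pi_pos] with y hy hlt
  obtain ⟨n, hn⟩ := hy
  rw [Real.dist_eq, hn, hm, ← mul_sub, abs_mul, abs_of_pos Real.two_pi_pos] at hlt
  have h1 : |((n - m : ℤ) : ℝ)| < 1 := by
    push_cast
    by_contra! hge
    nlinarith [Real.pi_pos]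
  have h2 : n - m = 0 := Int.abs_lt_one_iff.1 (by exact_mod_cast h1)
  rw [hn, hm, sub_eq_zero.1 h2]

lemma arg_eq_arg_neg_add_pi {x : ℂ} (hx : -x ∈ Complex.slitPlane) (him : 0 ≤ x.im) :
    Complex.arg x = Complex.arg (-x) + Real.pi := by
  rcases him.eq_or_lt with h | h
  · have hre : x.re < 0 := by
      rcases hx with hx | hx
      · simpa using hx
      · simp [← h] at hx
    rw [Complex.arg_eq_pi_iff.2 ⟨hre, h.symm⟩, Complex.arg_eq_zero_iff.2 (by simp [hre.le, ← h]),
      zero_add]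
  · rw [Complex.arg_neg_eq_arg_sub_pi_of_im_pos h]; ring

/-- Off the preimage of the slit, the angle defect takes two consecutive values; which one is
determined near the slit by the side. -/
lemma exists_angleDefect_values {σ : ℝ} (hσ : σ ^ 2 = 1) {p : disk} (hp : p ∈ interiorPts)
    (G : disk ≃ₜ disk) (hGp : G p = p) {S : disk → ℂ}
    (hSc : ContinuousOn S {z | (z : ℝ × ℝ) ≠ p})
    (hS : ∀ z : disk, (z : ℝ × ℝ) ≠ p →
      slitCoord σ p (G z) = slitCoord σ p z * Complex.exp (S z))
    (hcut : ∀ z ∈ interiorPts, (slitCoord σ p z).im = 0 → (slitCoord σ p z).re < 0 →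
      G z ∈ slitDisk σ p) :
    ∃ c : ℤ, (∀ z ∈ interiorPts, G z ∈ slitDisk σ p →
        angleDefect σ p G S z = 2 * Real.pi * c ∨
        angleDefect σ p G S z = 2 * Real.pi * (c + 1)) ∧
      ∃ b ∈ interiorPts, (b : ℝ × ℝ).1 = (p : ℝ × ℝ).1 ∧ ∀ᶠ z : disk in 𝓝 b,
        (0 ≤ (slitCoord σ p z).im → angleDefect σ p G S z = 2 * Real.pi * c) ∧
        ((slitCoord σ p z).im < 0 → angleDefect σ p G S z = 2 * Real.pi * (c + 1)) := by
  have hσ' : (-σ) ^ 2 = 1 := by rw [neg_sq, hσ]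
  have hopen : IsOpen {z : disk | (z : ℝ × ℝ) ≠ p} :=
    isOpen_ne.preimage continuous_subtype_val
  have hcoord : Continuous fun z : disk => slitCoord σ p z := by fun_prop
  have hcoordG : Continuous fun z : disk => slitCoord σ p (G z) := by fun_prop
  have hmul : ∀ z : disk, (z : ℝ × ℝ) ≠ p → ∃ n : ℤ, angleDefect σ p G S z = 2 * Real.pi * n :=
    fun z hz => exists_angleDefect_eq hσ hz (hS z hz)
  have hne : ∀ z : disk, G z ∈ slitDisk σ p → (z : ℝ × ℝ) ≠ p := by
    intro z hz h
    rw [show z = p from Subtype.ext h, hGp] at hz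
    exact ne_of_mem_slitDisk hz rfl
  have hSat : ∀ z : disk, (z : ℝ × ℝ) ≠ p → ContinuousAt (fun y => (S y).im) z := fun z hz =>
    Complex.continuous_im.continuousAt.comp (hSc.continuousAt (hopen.mem_nhds hz))
  have hGarg : ∀ z : disk, G z ∈ slitDisk σ p →
      ContinuousAt (fun y => Complex.arg (slitCoord σ p (G y))) z := fun z hz =>
    ContinuousAt.comp (f := fun y => slitCoord σ p (G y)) (Complex.continuousAt_arg hz)
      hcoordG.continuousAt
  have hoff : ∀ z : disk, z ∈ slitDisk σ p → G z ∈ slitDisk σ p →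
      ∀ᶠ y in 𝓝 z, angleDefect σ p G S y = angleDefect σ p G S z := by
    intro z hz hGz
    refine eventually_eq_of_two_pi_int (((hGarg z hGz).sub ?_).sub (hSat z (hne z hGz))) ?_
    · exact ContinuousAt.comp (f := fun y : disk => slitCoord σ p y) (Complex.continuousAt_arg hz)
        hcoord.continuousAt
    · exact eventually_of_mem (hopen.mem_nhds (hne z hGz)) hmul
  have hnear : ∀ b : disk, (slitCoord σ p b).im = 0 → (slitCoord σ p b).re < 0 →
      G b ∈ slitDisk σ p → ∀ᶠ z : disk in 𝓝 b,
        (0 ≤ (slitCoord σ p z).im → angleDefect σ p G S z = angleDefect σ p G S b) ∧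
        ((slitCoord σ p z).im < 0 →
          angleDefect σ p G S z = angleDefect σ p G S b + 2 * Real.pi) := by
    intro b him hre hGb
    let F : disk → ℝ := fun y => Complex.arg (slitCoord σ p (G y)) -
      (Complex.arg (-slitCoord σ p y) + Real.pi) - (S y).im
    have hb : b ∈ slitDisk (-σ) p := mem_slitDisk_neg.2 (Or.inl (by simpa using hre))
    have hnhds := (isOpen_slitDisk (-σ) p).mem_nhds hb
    have hFpos : ∀ y ∈ slitDisk (-σ) p, 0 ≤ (slitCoord σ p y).im →
        angleDefect σ p G S y = F y := by
      intro y hy h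
      simp only [F, angleDefect]
      rw [arg_eq_arg_neg_add_pi (mem_slitDisk_neg.1 hy) h]
    have hFneg : ∀ y : disk, (slitCoord σ p y).im < 0 →
        angleDefect σ p G S y = F y + 2 * Real.pi := by
      intro y h
      simp only [F, angleDefect, Complex.arg_neg_eq_arg_add_pi_of_im_neg h]
      ring
    have hFc : ContinuousAt F b := by
      refine ((hGarg b hGb).sub (ContinuousAt.add ?_ continuousAt_const)).sub (hSat b (hne b hGb))
      exact ContinuousAt.comp (f := fun y : disk => -slitCoord σ p y)
        (Complex.continuousAt_arg (mem_slitDisk_neg.1 hb)) hcoord.neg.continuousAt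
    have hFint : ∀ᶠ y in 𝓝 b, ∃ n : ℤ, F y = 2 * Real.pi * n := by
      filter_upwards [hnhds] with y hy
      obtain ⟨n, hn⟩ := hmul y (ne_of_mem_slitDisk hy)
      rcases le_or_gt 0 (slitCoord σ p y).im with h | h
      · exact ⟨n, by rw [← hFpos y hy h, hn]⟩
      · refine ⟨n - 1, ?_⟩
        have := hFneg y h
        push_cast
        linarith
    filter_upwards [eventually_eq_of_two_pi_int hFc hFint, hnhds] with y hy hy'
    rw [hFpos b hb him.ge, ← hy]
    exact ⟨hFpos y hy', hFneg y⟩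
  let B : Set disk := {z | (z : ℝ × ℝ) ∈ diskInt ∧ (z : ℝ × ℝ).1 = (p : ℝ × ℝ).1 ∧
    σ * (z : ℝ × ℝ).2 < σ * (p : ℝ × ℝ).2}
  have hBim : ∀ z ∈ B, (slitCoord σ p z).im = 0 := fun z hz => sub_eq_zero.2 hz.2.1
  have hBre : ∀ z ∈ B, (slitCoord σ p z).re < 0 := fun z hz => by
    rw [slitCoord_re, mul_sub]; exact sub_neg.2 hz.2.2
  have hBG : ∀ z ∈ B, G z ∈ slitDisk σ p := fun z hz => hcut z hz.1 (hBim z hz) (hBre z hz)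
  have hBpre : IsPreconnected B := by
    refine isPreconnected_of_convex (P := fun z => z ∈ diskInt ∧ z.1 = (p : ℝ × ℝ).1 ∧
      σ * z.2 < σ * (p : ℝ × ℝ).2) (convex_diskInt.inter
        ((convex_hyperplane (LinearMap.fst ℝ ℝ ℝ).isLinear _).inter
          (convex_halfSpace_lt (σ • LinearMap.snd ℝ ℝ ℝ).isLinear _)))
  obtain ⟨b₀, hb₀, hb₁, hb₂⟩ := exists_center hσ' hp
  let b : disk := ⟨b₀, diskInt_subset_disk hb₀⟩
  have hbB : b ∈ B := ⟨hb₀, hb₁, by change σ * b₀.2 < _; linarith⟩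
  have hBconst : ∀ z ∈ B, angleDefect σ p G S z = angleDefect σ p G S b := by
    intro z hz
    refine hBpre.eq_two_pi_int ?_ (fun y hy => hmul y (hne y (hBG y hy))) hz hbB
    have : ContinuousOn (fun y => Complex.arg (slitCoord σ p (G y)) - Real.pi - (S y).im) B :=
      fun y hy => (((hGarg y (hBG y hy)).sub continuousAt_const).sub
        (hSat y (hne y (hBG y hy)))).continuousWithinAt
    refine this.congr fun y hy => ?_
    rw [angleDefect, Complex.arg_eq_pi_iff.2 ⟨hBre y hy, hBim y hy⟩]
  obtain ⟨c, hc⟩ := hmul b (hne b (hBG b hbB))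
  refine ⟨c, ?_, b, hb₀, hb₁, ?_⟩
  · let Y : Set disk := G.symm '' (interiorPts ∩ slitDisk σ p)
    have hYpre : IsPreconnected Y :=
      (isPreconnected_interiorPts_inter_slitDisk hσ hp).image _ G.symm.continuous.continuousOn
    have hYG : ∀ z ∈ Y, z ∈ interiorPts ∧ G z ∈ slitDisk σ p := by
      rintro _ ⟨y, hy, rfl⟩
      exact ⟨G.symm.map_mem_interiorPts hy.1, by rw [G.apply_symm_apply]; exact hy.2⟩
    have hGY : ∀ z ∈ interiorPts, G z ∈ slitDisk σ p → z ∈ Y := fun z hz hGz =>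
      ⟨G z, ⟨G.map_mem_interiorPts hz, hGz⟩, G.symm_apply_apply z⟩
    let Q : disk → Prop := fun z => angleDefect σ p G S z = 2 * Real.pi * c ∨
        angleDefect σ p G S z = 2 * Real.pi * (c + 1)
    have hQb : Q b := Or.inl hc
    have hloc : ∀ x ∈ Y, ∀ᶠ y in 𝓝[Y] x, (Q x ↔ Q y) := by
      intro x hx
      apply eventually_nhdsWithin_of_eventually_nhds
      obtain ⟨hxi, hxG⟩ := hYG x hx
      by_cases hxs : x ∈ slitDisk σ p
      · filter_upwards [hoff x hxs hxG] with y hy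
        simp only [Q, hy]
      · have hxn := mem_slitDisk_neg.1 ((mem_slitDisk_or_neg hσ (hne x hxG)).resolve_left hxs)
        have him : (slitCoord σ p x).im = 0 := by
          by_contra h
          exact hxs (Or.inr h)
        have hre : (slitCoord σ p x).re < 0 := by
          rcases hxn with h | h
          · simpa using h
          · simp [him] at h
        have hxB : x ∈ B := ⟨hxi, sub_eq_zero.1 him, by
          rw [slitCoord_re, mul_sub] at hre; exact sub_neg.1 hre⟩
        have hxc : angleDefect σ p G S x = 2 * Real.pi * c := by rw [hBconst x hxB, hc]
        filter_upwards [hnear x him hre hxG] with y hy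
        refine iff_of_true (Or.inl hxc) ?_
        rcases le_or_gt 0 (slitCoord σ p y).im with h | h
        · exact Or.inl (by rw [hy.1 h, hxc])
        · exact Or.inr (by rw [hy.2 h, hxc]; ring)
    intro z hz hGz
    exact (hYpre.induction₂ (fun x y => Q x ↔ Q y) hloc (fun _ _ _ _ _ _ h h' => h.trans h')
      (fun _ _ _ _ h => h.symm) (hGY b hb₀ (hBG b hbB)) (hGY z hz hGz)).1 hQb
  · filter_upwards [hnear b (hBim b hbB) (hBre b hbB) (hBG b hbB)] with y hy
    refine ⟨fun h => by rw [hy.1 h, hc], fun h => by rw [hy.2 h, hc]; ring⟩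

lemma Homeomorph.exists_eq_iterate {X : Type*} [TopologicalSpace X] (g : X ≃ₜ X) (k : ℕ) :
    ∃ G : X ≃ₜ X, ⇑G = (⇑g)^[k] := by
  induction k with
  | zero => exact ⟨Homeomorph.refl X, rfl⟩
  | succ k ih =>
    obtain ⟨G, hG⟩ := ih
    exact ⟨g.trans G, by rw [Function.iterate_succ, ← hG]; rfl⟩

lemma Homeomorph.iterate_mem_interiorPts (g : disk ≃ₜ disk) (k : ℕ) {z : disk}
    (hz : z ∈ interiorPts) : (⇑g)^[k] z ∈ interiorPts := by
  obtain ⟨G, hG⟩ := g.exists_eq_iterate k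
  rw [← hG]
  exact G.map_mem_interiorPts hz

/-- If a fixed point outside the slit has angle zero, the two values of the angle defect are
`0` and `±2π`. -/
lemma angleDefect_const_of_fixed {σ : ℝ} (hσ : σ ^ 2 = 1) {p : disk} {G : disk → disk}
    (hG : Continuous G) {S : disk → ℂ} (hSc : ContinuousOn S {z | (z : ℝ × ℝ) ≠ p})
    (hS : ∀ z : disk, (z : ℝ × ℝ) ≠ p →
      slitCoord σ p (G z) = slitCoord σ p z * Complex.exp (S z))
    {w : disk} (hw : w ∈ slitDisk σ p) (hGw : G w = w) (hSw : S w = 0) {c : ℤ}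
    (hval : ∀ z ∈ interiorPts, G z ∈ slitDisk σ p →
        angleDefect σ p G S z = 2 * Real.pi * c ∨
        angleDefect σ p G S z = 2 * Real.pi * (c + 1)) : c = 0 ∨ c = -1 := by
  have hopen : IsOpen {z : disk | (z : ℝ × ℝ) ≠ p} := isOpen_ne.preimage continuous_subtype_val
  have hnhds := hopen.mem_nhds (ne_of_mem_slitDisk hw)
  have hcoord : Continuous fun z : disk => slitCoord σ p z := by fun_prop
  have hcoordG : Continuous fun z : disk => slitCoord σ p (G z) := by fun_prop
  have hcont : ContinuousAt (angleDefect σ p G S) w := by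
    refine ((ContinuousAt.comp (f := fun y => slitCoord σ p (G y)) (Complex.continuousAt_arg ?_)
      hcoordG.continuousAt).sub (ContinuousAt.comp (f := fun y : disk => slitCoord σ p y)
      (Complex.continuousAt_arg hw) hcoord.continuousAt)).sub
      (Complex.continuous_im.continuousAt.comp (hSc.continuousAt hnhds))
    rw [hGw]; exact hw
  have hzero : angleDefect σ p G S w = 0 := by simp [angleDefect, hGw, hSw]
  have hev := eventually_eq_of_two_pi_int hcont
    (eventually_of_mem hnhds fun z hz => exists_angleDefect_eq hσ hz (hS z hz))
  have hevG : ∀ᶠ y in 𝓝 w, G y ∈ slitDisk σ p :=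
    hG.continuousAt.eventually ((isOpen_slitDisk σ p).mem_nhds (by rw [hGw]; exact hw))
  obtain ⟨y, hyi, hy, hyG⟩ := ((mem_closure_iff_frequently.1 (dense_interiorPts w)).and_eventually
    (hev.and hevG)).exists
  have := hval y hyi hyG
  rw [hy, hzero] at this
  rcases this with h | h
  · left
    have := (mul_eq_zero.1 h.symm).resolve_left Real.two_pi_pos.ne'
    exact_mod_cast this
  · right
    have := (mul_eq_zero.1 h.symm).resolve_left Real.two_pi_pos.ne'
    have h' : c + 1 = 0 := by exact_mod_cast this
    omega

/-- Let `g` be an area preserving homeomorphism of degree one around its fixed point `p` whose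
iterates move the slit at `p` off itself. Then all fixed points lie on the slit. -/
theorem not_mem_slitDisk_of_fixed {σ : ℝ} (hσ : σ ^ 2 = 1) {p : disk} (hp : p ∈ interiorPts)
    (g : disk ≃ₜ disk) (hg : MeasurePreserving g diskArea diskArea) (hgp : g p = p)
    {η : disk → ℂ} (hηc : ContinuousOn η {z | (z : ℝ × ℝ) ≠ p})
    (hη : ∀ z : disk, (z : ℝ × ℝ) ≠ p →
      slitCoord σ p (g z) = slitCoord σ p z * Complex.exp (η z))
    (hcut : ∀ z ∈ interiorPts, (slitCoord σ p z).im = 0 → (slitCoord σ p z).re < 0 →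
      ∀ k, 1 ≤ k → (⇑g)^[k] z ∈ slitDisk σ p)
    {w : disk} (hgw : g w = w) : w ∉ slitDisk σ p := by
  intro hw
  have hwp := ne_of_mem_slitDisk hw
  have hgp' : ∀ k, (⇑g)^[k] p = p := fun k => Function.iterate_fixed hgp k
  have hgw' : ∀ k, (⇑g)^[k] w = w := fun k => Function.iterate_fixed hgw k
  have hgne : ∀ k, ∀ z : disk, (z : ℝ × ℝ) ≠ p → ((⇑g)^[k] z : ℝ × ℝ) ≠ p := fun k z hz h =>
    hz (congrArg Subtype.val (g.injective.iterate k ((Subtype.ext h).trans (hgp' k).symm)))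
  have hηw : Complex.exp (η w) = 1 := by
    have := hη w hwp
    rw [hgw] at this
    exact (mul_eq_left₀ (Complex.slitPlane_ne_zero hw)).1 this.symm
  let S : ℕ → disk → ℂ := fun k z => ∑ i ∈ Finset.range k, (η ((⇑g)^[i] z) - η w)
  have hSc : ∀ k, ContinuousOn (S k) {z | (z : ℝ × ℝ) ≠ p} := fun k =>
    continuousOn_finsetSum _ fun i _ => ((hηc.comp (g.continuous.iterate i).continuousOn
      (hgne i)).sub continuousOn_const)
  have hS : ∀ k, ∀ z : disk, (z : ℝ × ℝ) ≠ p →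
      slitCoord σ p ((⇑g)^[k] z) = slitCoord σ p z * Complex.exp (S k z) := by
    intro k z hz
    induction k with
    | zero => simp [S]
    | succ k ih =>
      have : S (k + 1) z = S k z + (η ((⇑g)^[k] z) - η w) := Finset.sum_range_succ _ _
      rw [Function.iterate_succ_apply', hη _ (hgne k z hz), ih, this, Complex.exp_add,
        Complex.exp_sub, hηw, div_one, mul_assoc]
  have hSw : ∀ k, S k w = 0 := fun k => by simp [S, hgw']
  let T : ℕ → disk → ℝ := fun k => angleDefect σ p (⇑g)^[k] (S k)
  have hT : ∀ k z, T (k + 1) z = T k z + T 1 ((⇑g)^[k] z) := by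
    intro k z
    have : S (k + 1) z = S k z + (η ((⇑g)^[k] z) - η w) := Finset.sum_range_succ _ _
    have h1 : S 1 ((⇑g)^[k] z) = η ((⇑g)^[k] z) - η w := by simp [S]
    simp only [T, angleDefect, this, h1, Function.iterate_succ_apply', Function.iterate_zero, id_eq,
      Complex.add_im]
    ring
  have hvalues : ∀ k, 1 ≤ k → ∃ c : ℤ, (c = 0 ∨ c = -1) ∧
      (∀ z ∈ interiorPts, (⇑g)^[k] z ∈ slitDisk σ p →
        T k z = 2 * Real.pi * c ∨ T k z = 2 * Real.pi * (c + 1)) ∧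
      ∃ b ∈ interiorPts, (b : ℝ × ℝ).1 = (p : ℝ × ℝ).1 ∧ ∀ᶠ z : disk in 𝓝 b,
        (0 ≤ (slitCoord σ p z).im → T k z = 2 * Real.pi * c) ∧
        ((slitCoord σ p z).im < 0 → T k z = 2 * Real.pi * (c + 1)) := by
    intro k hk
    obtain ⟨G, hG⟩ := g.exists_eq_iterate k
    obtain ⟨c, hc, hb⟩ := exists_angleDefect_values hσ hp G (by rw [hG, hgp']) (hSc k)
      (by rw [hG]; exact hS k) (by rw [hG]; exact fun z hz h h' => hcut z hz h h' k hk)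
    rw [hG] at hc hb
    exact ⟨c, angleDefect_const_of_fixed hσ (g.continuous.iterate k) (hSc k) (hS k) hw (hgw' k)
      (hSw k) hc, hc, hb⟩
  have hbound : ∀ k, 1 ≤ k → ∀ z ∈ interiorPts, (⇑g)^[k] z ∈ slitDisk σ p →
      |T k z| ≤ 2 * Real.pi := by
    intro k hk z hz hkz
    have hpi := Real.pi_pos
    obtain ⟨c, hc, hval, -⟩ := hvalues k hk
    rw [abs_le]
    rcases hc with rfl | rfl <;> rcases hval z hz hkz with h | h <;> rw [h] <;>
      constructor <;> push_cast <;> linarith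
  obtain ⟨ε, O, hε, hO, hOne, hOi, hOT, hsign⟩ : ∃ (ε : ℝ) (O : Set disk), ε ^ 2 = 1 ∧ IsOpen O ∧
      O.Nonempty ∧ O ⊆ interiorPts ∧ (∀ z ∈ O, ε * T 1 z = 2 * Real.pi) ∧
      ∀ z ∈ interiorPts, g z ∈ slitDisk σ p → 0 ≤ ε * T 1 z := by
    have hpi := Real.pi_pos
    have hcoord : Continuous fun z : disk => (slitCoord σ p z).im :=
      Complex.continuous_im.comp (by fun_prop)
    obtain ⟨c, hc, hval, b, hbi, hb1, hev⟩ := hvalues 1 le_rfl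
    obtain ⟨U, hUsub, hUo, hbU⟩ := eventually_nhds_iff.1 hev
    obtain ⟨t, ht, hshift⟩ := exists_shift hUo hbU hbi
    rcases hc with rfl | rfl
    · obtain ⟨y, hyU, hyi, hy⟩ := hshift (-t) (by rw [abs_neg, abs_of_pos ht])
      refine ⟨1, U ∩ interiorPts ∩ {z | (slitCoord σ p z).im < 0}, one_pow 2,
        (hUo.inter isOpen_interiorPts).inter (isOpen_lt hcoord continuous_const),
        ⟨y, ⟨hyU, hyi⟩, ?_⟩, fun z hz => hz.1.2, fun z hz => ?_, fun z hz hgz => ?_⟩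
      · simp [slitCoord_im, hy, hb1, ht]
      · rw [(hUsub z hz.1.1).2 hz.2]; simp
      · rcases hval z hz hgz with h | h <;> rw [h] <;> simp [hpi.le]
    · obtain ⟨y, hyU, hyi, hy⟩ := hshift t (abs_of_pos ht)
      refine ⟨-1, U ∩ interiorPts ∩ {z | 0 < (slitCoord σ p z).im}, by norm_num,
        (hUo.inter isOpen_interiorPts).inter (isOpen_lt continuous_const hcoord),
        ⟨y, ⟨hyU, hyi⟩, ?_⟩, fun z hz => hz.1.2, fun z hz => ?_, fun z hz hgz => ?_⟩
      · simp [slitCoord_im, hy, hb1, ht]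
      · rw [(hUsub z hz.1.1).1 (show 0 < (slitCoord σ p z).im from hz.2).le]; simp
      · rcases hval z hz hgz with h | h <;> rw [h] <;> simp [hpi.le]
  let R : Set disk := ⋂ i : ℕ, (⇑g)^[i] ⁻¹' slitDisk σ p
  have hRm : MeasurableSet R := MeasurableSet.iInter fun i =>
    ((isOpen_slitDisk σ p).preimage (g.continuous.iterate i)).measurableSet
  have hRnull : diskArea Rᶜ = 0 := by
    rw [compl_iInter, measure_iUnion_null_iff]
    intro i
    rw [← preimage_compl, (hg.iterate i).measure_preimage
      (isOpen_slitDisk σ p).measurableSet.compl.nullMeasurableSet]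
    exact diskArea_compl_slitDisk σ p
  have hE : diskArea (O ∩ R) ≠ 0 := by
    rw [measure_inter_conull hRnull]
    exact diskArea_ne_zero hO hOne
  obtain ⟨x, hx, m, hm, hmx⟩ := hg.exists_mem_iterate_mem
    (hO.measurableSet.inter hRm).nullMeasurableSet hE
  have hxR : ∀ i, (⇑g)^[i] x ∈ slitDisk σ p := fun i => mem_iInter.1 hx.2 i
  have hxi : ∀ i, (⇑g)^[i] x ∈ interiorPts := fun i => g.iterate_mem_interiorPts i (hOi hx.1)
  have hgrow : ∀ j, 2 * Real.pi ≤ ε * T (j + 1) x := by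
    intro j
    induction j with
    | zero => exact (hOT x hx.1).ge
    | succ j ih =>
      rw [hT, mul_add]
      have := hsign _ (hxi (j + 1)) (by
        rw [← Function.iterate_succ_apply' g]; exact hxR (j + 1 + 1))
      linarith
  have hlow : 4 * Real.pi ≤ ε * T (m + 1) x := by
    obtain ⟨j, rfl⟩ := Nat.exists_eq_succ_of_ne_zero hm
    rw [hT, mul_add, hOT _ hmx.1]
    linarith [hgrow j]
  have hup := hbound (m + 1) (by omega) x (hOi hx.1) (hxR _)
  have habs : |ε| = 1 := by
    rw [← abs_one, ← sq_eq_sq_iff_abs_eq_abs, hε, one_pow]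
  have : ε * T (m + 1) x ≤ |T (m + 1) x| := by
    refine (le_abs_self _).trans ?_
    rw [abs_mul, habs, one_mul]
  linarith [Real.pi_pos]

/-! ### Points of the axis mapped to the axis -/

lemma IsPreconnected.pos_of_ne_zero {X : Type*} [TopologicalSpace X] {s : Set X}
    (hs : IsPreconnected s) {F : X → ℝ} (hF : ContinuousOn F s) (h0 : ∀ z ∈ s, F z ≠ 0)
    {x y : X} (hx : x ∈ s) (hy : y ∈ s) (hpos : 0 < F x) : 0 < F y := by
  by_contra! hle
  obtain ⟨z, hz, hz0⟩ := hs.intermediate_value hy hx hF ⟨hle, hpos.le⟩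
  exact h0 z hz hz0

/-- The open half of the disk on the side `t` of the vertical axis. -/
def halfDisk (t : ℝ) : Set disk := {z | z ∈ interiorPts ∧ 0 < t * (z : ℝ × ℝ).1}

lemma isOpen_halfDisk (t : ℝ) : IsOpen (halfDisk t) :=
  isOpen_interiorPts.inter (isOpen_lt (g := fun z : disk => t * (z : ℝ × ℝ).1) continuous_const
    (by fun_prop))

lemma diskArea_halfDisk_neg (t : ℝ) : diskArea (halfDisk (-t)) = diskArea (halfDisk t) := by
  have himage : ∀ t, Subtype.val '' halfDisk t = diskInt ∩ {z : ℝ × ℝ | 0 < t * z.1} := by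
    intro t
    ext z
    constructor
    · rintro ⟨y, hy, rfl⟩
      exact hy
    · intro hz
      exact ⟨⟨z, diskInt_subset_disk hz.1⟩, hz, rfl⟩
  have hrefl : MeasurePreserving (Prod.map (fun x : ℝ => -x) (id : ℝ → ℝ)) volume volume :=
    (Measure.measurePreserving_neg volume).prod (MeasurePreserving.id volume)
  have hopen : IsOpen (diskInt ∩ {z : ℝ × ℝ | 0 < t * z.1}) :=
    isOpen_diskInt.inter (isOpen_lt continuous_const (by fun_prop))
  rw [diskArea_apply, diskArea_apply, himage, himage,
    ← hrefl.measure_preimage hopen.measurableSet.nullMeasurableSet]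
  congr 1
  ext z
  simp [mem_diskInt_iff]

/-- An area preserving homeomorphism of the disk maps some interior point of the vertical axis
to the vertical axis. -/
lemma exists_axis_to_axis (f : disk ≃ₜ disk) (hf : MeasurePreserving f diskArea diskArea) :
    ∃ z ∈ interiorPts, (z : ℝ × ℝ).1 = 0 ∧ (f z : ℝ × ℝ).1 = 0 := by
  by_contra! hcon
  have hunit : ∀ x : ℝ, x ≠ 0 → ∃ s : ℝ, (s = 1 ∨ s = -1) ∧ 0 < s * x := by
    intro x hx
    rcases lt_or_gt_of_ne hx with h | h
    · exact ⟨-1, Or.inr rfl, by linarith⟩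
    · exact ⟨1, Or.inl rfl, by linarith⟩
  have h0int : (0 : ℝ × ℝ) ∈ diskInt := mem_diskInt_iff.2 (by simp)
  let o : disk := ⟨0, diskInt_subset_disk h0int⟩
  have ho : o ∈ interiorPts := h0int
  obtain ⟨s, hs, hso⟩ := hunit _ (hcon o ho rfl)
  have haxis : ∀ z ∈ interiorPts, (z : ℝ × ℝ).1 = 0 → 0 < s * (f z : ℝ × ℝ).1 := by
    intro z hz hz1
    have hpre : IsPreconnected {z : disk | (z : ℝ × ℝ) ∈ diskInt ∧ (z : ℝ × ℝ).1 = 0} :=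
      isPreconnected_of_convex (P := fun z => z ∈ diskInt ∧ z.1 = 0)
        (convex_diskInt.inter (convex_hyperplane (LinearMap.fst ℝ ℝ ℝ).isLinear 0))
    have hs0 : s ≠ 0 := by rcases hs with rfl | rfl <;> norm_num
    have hcont : Continuous fun z : disk => s * (f z : ℝ × ℝ).1 := by fun_prop
    exact hpre.pos_of_ne_zero hcont.continuousOn
      (fun y hy => mul_ne_zero hs0 (hcon y hy.1 hy.2)) (x := o) ⟨ho, rfl⟩ ⟨hz, hz1⟩ hso
  let A : Set disk := {z | (z : ℝ × ℝ) ∈ diskInt ∧ s * (z : ℝ × ℝ).1 ≤ 0}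
  have hoA : o ∈ A := ⟨ho, by simp [o]⟩
  have hA1 : ∀ z ∈ A, (f.symm z : ℝ × ℝ).1 ≠ 0 := by
    intro z hz h
    have := haxis _ (f.symm.map_mem_interiorPts hz.1) h
    rw [f.apply_symm_apply] at this
    exact this.not_ge hz.2
  obtain ⟨t, ht, hto⟩ := hunit _ (hA1 o hoA)
  have ht0 : t ≠ 0 := by rcases ht with rfl | rfl <;> norm_num
  have hA2 : ∀ z ∈ A, 0 < t * (f.symm z : ℝ × ℝ).1 := by
    intro z hz
    have hpre : IsPreconnected A :=
      isPreconnected_of_convex (P := fun z => z ∈ diskInt ∧ s * z.1 ≤ 0)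
        (convex_diskInt.inter (convex_halfSpace_le (s • LinearMap.fst ℝ ℝ ℝ).isLinear 0))
    have hcont : Continuous fun z : disk => t * (f.symm z : ℝ × ℝ).1 := by fun_prop
    exact hpre.pos_of_ne_zero hcont.continuousOn (fun y hy => mul_ne_zero ht0 (hA1 y hy)) hoA hz hto
  have hAm : MeasurableSet A := isOpen_interiorPts.measurableSet.inter
    (isClosed_le (f := fun z : disk => s * (z : ℝ × ℝ).1) (by fun_prop)
      continuous_const).measurableSet
  let O : Set disk := halfDisk t ∩ f ⁻¹' halfDisk s
  have hOo : IsOpen O := (isOpen_halfDisk t).inter ((isOpen_halfDisk s).preimage f.continuous)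
  have hOne : O.Nonempty := by
    obtain ⟨r, hr, hshift⟩ := exists_shift ((isOpen_halfDisk s).preimage f.continuous) (z := o)
      ⟨f.map_mem_interiorPts ho, hso⟩ ho
    obtain ⟨y, hyV, hyi, hy⟩ := hshift (t * r) (by
      rcases ht with rfl | rfl <;> simp [abs_of_pos hr])
    refine ⟨y, ⟨hyi, ?_⟩, hyV⟩
    rcases ht with rfl | rfl <;> simp [hy, o, hr]
  have hareas : diskArea (halfDisk t) = diskArea (halfDisk (-s)) := by
    rcases hs with rfl | rfl <;> rcases ht with rfl | rfl <;>
      simp [diskArea_halfDisk_neg]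
  have hdisj : Disjoint (f ⁻¹' A) O := by
    rw [Set.disjoint_left]
    exact fun z hz hz' => (show 0 < s * (f z : ℝ × ℝ).1 from hz'.2.2).not_ge hz.2
  have hsub : f ⁻¹' A ∪ O ⊆ halfDisk t := by
    rintro z (hz | hz)
    · have := f.symm.map_mem_interiorPts hz.1
      have h2 := hA2 _ hz
      rw [f.symm_apply_apply] at this h2
      exact ⟨this, h2⟩
    · exact hz.1
  have hle : diskArea A + diskArea O ≤ diskArea A := calc
    diskArea A + diskArea O = diskArea (f ⁻¹' A ∪ O) := by
      rw [measure_union hdisj hOo.measurableSet, hf.measure_preimage hAm.nullMeasurableSet]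
    _ ≤ diskArea (halfDisk (-s)) := hareas ▸ measure_mono hsub
    _ ≤ diskArea A := measure_mono fun z hz => ⟨hz.1, by
      have : 0 < -s * (z : ℝ × ℝ).1 := hz.2
      linarith⟩
  refine diskArea_ne_zero hOo hOne ?_
  have hfin := measure_ne_top diskArea A
  exact nonpos_iff_eq_zero.1 ((ENNReal.add_le_add_iff_left hfin).1 (by rwa [add_zero]))

/-! ### Reversible homeomorphisms -/

lemma ID_eq_self {z : disk} (hz : (z : ℝ × ℝ).1 = 0) : ID z = z :=
  Subtype.ext (Prod.ext (by simp [ID, refl2, hz]) rfl)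

/-- An orbit of a reversible map that meets the axis twice is periodic. -/
lemma iterate_eq_self_of_axis {f : disk ≃ₜ disk} (hrev : ∀ z : disk, f (ID z) = ID (f.symm z))
    {z : disk} (hz : (z : ℝ × ℝ).1 = 0) {n : ℕ} (hn : ((⇑f)^[n] z : ℝ × ℝ).1 = 0) :
    (⇑f)^[n + n] z = z := by
  have hsemi : Function.Semiconj ID f.symm f := fun y => (hrev y).symm
  have := hsemi.iterate_right n ((⇑f)^[n] z)
  rw [Function.LeftInverse.iterate f.symm_apply_apply n z, ID_eq_self hz, ID_eq_self hn] at this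
  rw [Function.iterate_add_apply, ← this]

/-- Let `p` be the extreme interior periodic point of the axis in the direction `-σ`. Then all
periodic points lie on the slit at `p` in this direction. -/
lemma not_mem_slitDisk_of_periodic {f : disk ≃ₜ disk}
    (hrev : ∀ z : disk, f (ID z) = ID (f.symm z)) (hf : MeasurePreserving f diskArea diskArea)
    {σ : ℝ} (hσ : σ ^ 2 = 1) {p : disk} (hp : p ∈ interiorPts) (hp1 : (p : ℝ × ℝ).1 = 0)
    (hext : ∀ z ∈ interiorPts, (z : ℝ × ℝ).1 = 0 → (∃ k : ℕ, 1 ≤ k ∧ (⇑f)^[k] z = z) →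
      σ * (p : ℝ × ℝ).2 ≤ σ * (z : ℝ × ℝ).2)
    {M : ℕ} (hM : 1 ≤ M) (hMp : (⇑f)^[M] p = p) {w : disk} (hMw : (⇑f)^[M] w = w) :
    w ∉ slitDisk σ p := by
  obtain ⟨e, he⟩ := f.exists_eq_iterate M
  have hep : e p = p := by rw [he, hMp]
  have hew : e w = w := by rw [he, hMw]
  obtain ⟨η, hηc, hη⟩ := e.exists_log_sq hσ hp hep
  have hg : ⇑(e.trans e) = (⇑f)^[M + M] := by
    rw [Function.iterate_add, ← he]; rfl
  refine not_mem_slitDisk_of_fixed hσ hp (e.trans e) (hg ▸ hf.iterate (M + M))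
    (by simp [hep]) hηc hη (fun z hz him hre k hk => ?_) (by simp [hew])
  rw [hg, ← Function.iterate_mul]
  by_contra hslit
  have hz1 : (z : ℝ × ℝ).1 = 0 := by rw [slitCoord_im, hp1, sub_zero] at him; exact him
  have hz2 : ((⇑f)^[(M + M) * k] z : ℝ × ℝ).1 = 0 := by
    by_contra h
    exact hslit (Or.inr (by rw [slitCoord_im, hp1, sub_zero]; exact h))
  have hk : 1 ≤ (M + M) * k := Nat.mul_pos (by omega) hk
  have := hext z hz hz1 ⟨_, by omega, iterate_eq_self_of_axis hrev hz1 hz2⟩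
  rw [slitCoord_re, mul_sub] at hre
  linarith

/-- **Corollary 1.2.** Every area preserving reversible homeomorphism of the closed
disk has either precisely one interior symmetric fixed point with no other periodic
points, or infinitely many interior symmetric periodic points. -/
theorem dichotomy_disk
    (f : disk ≃ₜ disk)
    (hrev : ∀ z : disk, f (ID z) = ID (f.symm z))
    (harea : MeasurePreserving f
      ((volume : Measure (ℝ × ℝ)).comap (Subtype.val : disk → ℝ × ℝ))
      ((volume : Measure (ℝ × ℝ)).comap (Subtype.val : disk → ℝ × ℝ))) :
    (∃ z : disk,
        {w : disk | ∃ k : ℕ, 1 ≤ k ∧ (⇑f)^[k] w = w} = {z} ∧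
        (z : ℝ × ℝ) ∈ diskInt ∧ f z = z ∧ ID z = z) ∨
    {z : disk | (z : ℝ × ℝ) ∈ diskInt ∧
        (∃ k : ℕ, 1 ≤ k ∧ (⇑f)^[k] z = z) ∧
        (∃ l : ℕ, 1 ≤ l ∧ (⇑f)^[l] z = ID z)}.Infinite := by
  rw [or_iff_not_imp_right, Set.not_infinite]
  intro hfin
  have hf : MeasurePreserving f diskArea diskArea := harea
  let P : Set disk := {z | z ∈ interiorPts ∧ (z : ℝ × ℝ).1 = 0 ∧ ∃ k : ℕ, 1 ≤ k ∧ (⇑f)^[k] z = z}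
  have hPfin : P.Finite := by
    refine hfin.subset ?_
    rintro z ⟨hz, hz1, k, hk, hkz⟩
    exact ⟨hz, ⟨k, hk, hkz⟩, k, hk, by rw [hkz, ID_eq_self hz1]⟩
  have hPne : P.Nonempty := by
    obtain ⟨z, hz, hz1, hz2⟩ := exists_axis_to_axis f hf
    exact ⟨z, hz, hz1, 1 + 1, by norm_num, iterate_eq_self_of_axis hrev hz1 hz2⟩
  obtain ⟨p, hpP, hpmin⟩ := exists_min_image P (fun z => (z : ℝ × ℝ).2) hPfin hPne
  obtain ⟨q, hqP, hqmax⟩ := exists_max_image P (fun z => (z : ℝ × ℝ).2) hPfin hPne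
  have hunique : ∀ w : disk, (∃ k : ℕ, 1 ≤ k ∧ (⇑f)^[k] w = w) → w = p := by
    rintro w ⟨k, hk, hkw⟩
    obtain ⟨hp, hp1, kp, hkp, hfp⟩ := id hpP
    obtain ⟨hq, hq1, kq, hkq, hfq⟩ := id hqP
    let M := k * kp * kq
    have hM : 1 ≤ M := Nat.mul_pos (Nat.mul_pos hk hkp) hkq
    have hMw : (⇑f)^[M] w = w :=
      ((show Function.IsPeriodicPt f k w from hkw).mul_const kp).mul_const kq
    have hMp : (⇑f)^[M] p = p :=
      ((show Function.IsPeriodicPt f kp p from hfp).const_mul k).mul_const kq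
    have hMq : (⇑f)^[M] q = q := (show Function.IsPeriodicPt f kq q from hfq).const_mul (k * kp)
    have hlow : ∀ w : disk, (⇑f)^[M] w = w → w ∉ slitDisk 1 p := fun w hw =>
      not_mem_slitDisk_of_periodic hrev hf (one_pow 2) hp hp1
        (fun z hz hz1 hzk => by simpa using hpmin z ⟨hz, hz1, hzk⟩) hM hMp hw
    have hhigh : ∀ w : disk, (⇑f)^[M] w = w → w ∉ slitDisk (-1) q := fun w hw =>
      not_mem_slitDisk_of_periodic hrev hf (by norm_num) hq hq1
        (fun z hz hz1 hzk => by simpa using hqmax z ⟨hz, hz1, hzk⟩) hM hMq hw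
    have hqp : (q : ℝ × ℝ).2 ≤ (p : ℝ × ℝ).2 := by
      by_contra! h
      exact hlow q hMq (Or.inl (by rw [slitCoord_re]; linarith))
    apply Subtype.ext
    refine Prod.ext ?_ (le_antisymm ?_ ?_)
    · by_contra h
      exact hlow w hMw (Or.inr (by rw [slitCoord_im]; exact sub_ne_zero.2 h))
    · by_contra! h
      exact hlow w hMw (Or.inl (by rw [slitCoord_re]; linarith))
    · by_contra! h
      have := hpmin q hqP
      exact hhigh w hMw (Or.inl (by rw [slitCoord_re]; linarith))
  refine ⟨p, ?_, hpP.1, ?_, ID_eq_self hpP.2.1⟩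
  · ext w
    refine ⟨hunique w, fun hw => ?_⟩
    rw [mem_singleton_iff.1 hw]
    exact hpP.2.2
  · obtain ⟨k, hk, hkp⟩ := hpP.2.2
    exact hunique _ ⟨k, hk, by
      rw [← Function.iterate_succ_apply, Function.iterate_succ_apply', hkp]⟩
end
end

section
/- Let f : A → A be an area preserving reversible homeomorphism of the closed annulus A which is isotopic to the identity. If f has an odd-periodic point (some z ∈ A and odd integer k ≥ 1 with f^k(z) = z, not necessarily symmetric nor interior), then the set of interior symmetric odd-periodic points of f (points z in the interior Å with f^k(z) = z for some odd k ≥ 1 and f^ℓ(z) = I(z) for some integer ℓ ≥ 1) is infinite. -/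
open MeasureTheory Set

noncomputable section

/-- The closed annulus `A = {z : 1 ≤ |z| ≤ 2}`. -/
def annulus : Set (ℝ × ℝ) := {p | 1 ≤ enorm2 p ∧ enorm2 p ≤ 2}

/-- The open annulus `Å = {z : 1 < |z| < 2}`, the interior of `A`. -/
def annulusInt : Set (ℝ × ℝ) := {p | 1 < enorm2 p ∧ enorm2 p < 2}

lemma refl2_mem_annulus {p : ℝ × ℝ} (h : p ∈ annulus) : refl2 p ∈ annulus := by
  simpa [annulus, enorm2_refl2] using h

/-- The restriction `I_A` of the reflection to the closed annulus. -/
def IA : annulus → annulus := fun z => ⟨refl2 z, refl2_mem_annulus z.2⟩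

/-- A self-homeomorphism `f` of a set `Ω ⊆ ℝ²` is isotopic to the identity:
there is a continuous `H : [0,1] × Ω → Ω` such that each `H(s,·)` is a
homeomorphism of `Ω`, `H(0,·) = id` and `H(1,·) = f`. -/
def IsotopicToId {Ω : Set (ℝ × ℝ)} (f : Ω ≃ₜ Ω) : Prop :=
  ∃ H : (Set.Icc (0:ℝ) 1) × Ω → Ω, Continuous H ∧
    (∀ s, ∃ e : Ω ≃ₜ Ω, ∀ z, H (s, z) = e z) ∧
    (∀ z, H (⟨0, by norm_num⟩, z) = z) ∧
    (∀ z, H (⟨1, by norm_num⟩, z) = f z)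

/-! ### Lifting angles -/

lemma exists_angle_lift {Y : Type*} [TopologicalSpace Y] (R : unitInterval × Y → ℂ)
    (hR : Continuous R) (hR0 : ∀ p, R p ≠ 0) (hR1 : ∀ y, R (0, y) = 1) :
    ∃ a : unitInterval × Y → ℝ, Continuous a ∧ (∀ y, a (0, y) = 0) ∧
      ∀ p, R p = ‖R p‖ * Complex.exp (a p * Complex.I) := by
  have hn : ∀ p, ((R p / ‖R p‖ : ℂ)) ∈ Submonoid.unitSphere ℂ := by
    intro p
    have := norm_ne_zero_iff.2 (hR0 p)
    simp [Submonoid.unitSphere, this]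
  let G : C(unitInterval × Y, Circle) :=
    ⟨fun p => ⟨R p / ‖R p‖, hn p⟩, by
      refine Continuous.subtype_mk (hR.div (by fun_prop) ?_) _
      intro p
      simpa using hR0 p⟩
  have hGp : ∀ p, ((G p : Circle) : ℂ) = R p / ‖R p‖ := fun _ => rfl
  have hG0 : ∀ y, G (0, y) = Circle.exp ((ContinuousMap.const Y (0 : ℝ)) y) := by
    intro y
    ext
    rw [hGp, hR1]
    simp
  let a := Circle.isCoveringMap_exp.liftHomotopy G (ContinuousMap.const Y (0 : ℝ)) hG0
  refine ⟨a, a.continuous, fun y => ?_, fun p => ?_⟩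
  · exact Circle.isCoveringMap_exp.liftHomotopy_zero G _ hG0 y
  · have h := congrFun (Circle.isCoveringMap_exp.liftHomotopy_lifts G _ hG0) p
    have h2 : Complex.exp (a p * Complex.I) = R p / ‖R p‖ := by
      rw [← hGp, ← h]
      exact (Circle.coe_exp _).symm
    have h3 : (‖R p‖ : ℂ) ≠ 0 := by simpa using hR0 p
    rw [h2]
    field_simp

lemma angle_lift_unique {a b : unitInterval → ℝ} (ha : Continuous a) (hb : Continuous b)
    (h0 : a 0 = b 0)
    (h : ∀ t, Complex.exp (a t * Complex.I) = Complex.exp (b t * Complex.I)) : a = b := by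
  refine Circle.isCoveringMap_exp.eq_of_comp_eq ha hb ?_ 0 h0
  funext t
  ext
  simpa using h t

lemma exp_angle_eq_of_norm_mul_eq {z : ℂ} {r s : ℝ} {α β : ℝ} (hr : 0 < r) (hs : 0 < s)
    (h1 : z = r * Complex.exp (α * Complex.I))
    (h2 : z = s * Complex.exp (β * Complex.I)) :
    Complex.exp (α * Complex.I) = Complex.exp (β * Complex.I) := by
  have hr' : ‖z‖ = r := by
    rw [h1, norm_mul, Complex.norm_exp_ofReal_mul_I]; simp [abs_of_pos hr]
  have hs' : ‖z‖ = s := by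
    rw [h2, norm_mul, Complex.norm_exp_ofReal_mul_I]; simp [abs_of_pos hs]
  have : r = s := hr'.symm.trans hs'
  subst this
  have hr0 : (r : ℂ) ≠ 0 := by exact_mod_cast hr.ne'
  exact mul_left_cancel₀ hr0 (h1.symm.trans h2)

/-! ### The strip covering the annulus -/

/-- The universal cover of the annulus: pairs `(x, r)` of an angle and a radius. -/
abbrev Strip : Type := ℝ × Icc (1 : ℝ) 2

/-- The strip as a subset of the complex plane. -/
def cx (p : Strip) : ℂ := ⟨p.1, p.2⟩

/-- The deck transformations. -/
def sh (k : ℤ) (p : Strip) : Strip := (p.1 + 2 * Real.pi * k, p.2)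

/-- The lift of the reflection. -/
def rf (p : Strip) : Strip := (-p.1, p.2)

lemma cx_injective : Function.Injective cx := by
  intro p q h
  have h1 := congrArg Complex.re h
  have h2 := congrArg Complex.im h
  exact Prod.ext h1 (Subtype.ext h2)

lemma continuous_cx : Continuous cx := by
  have : cx = fun p : Strip => (p.1 : ℂ) + (p.2 : ℝ) * Complex.I := by
    funext p; apply Complex.ext <;> simp [cx]
  rw [this]; fun_prop

lemma continuous_sh (k : ℤ) : Continuous (sh k) := by unfold sh; fun_prop
lemma continuous_rf : Continuous rf := by unfold rf; fun_prop

@[simp] lemma rf_rf (p : Strip) : rf (rf p) = p := by simp [rf]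
@[simp] lemma sh_zero (p : Strip) : sh 0 p = p := by simp [sh]
@[simp] lemma sh_fst (k : ℤ) (p : Strip) : (sh k p).1 = p.1 + 2 * Real.pi * k := rfl
@[simp] lemma sh_snd (k : ℤ) (p : Strip) : (sh k p).2 = p.2 := rfl
@[simp] lemma rf_fst (p : Strip) : (rf p).1 = -p.1 := rfl
@[simp] lemma rf_snd (p : Strip) : (rf p).2 = p.2 := rfl
@[simp] lemma rf_axis (c : Icc (1 : ℝ) 2) : rf ((0, c) : Strip) = (0, c) := by simp [rf]

lemma sh_sh (k l : ℤ) (p : Strip) : sh k (sh l p) = sh (k + l) p := by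
  apply Prod.ext <;> simp; ring

lemma rf_sh (k : ℤ) (p : Strip) : rf (sh k p) = sh (-k) (rf p) := by
  apply Prod.ext <;> simp; ring

lemma sh_injective (k : ℤ) : Function.Injective (sh k) := by
  intro p q h
  have := congrArg (sh (-k)) h
  simpa [sh_sh] using this

lemma sh_eq_sh_iff {k l : ℤ} {p : Strip} : sh k p = sh l p ↔ k = l := by
  refine ⟨fun h => ?_, fun h => h ▸ rfl⟩
  have h1 := congrArg Prod.fst h
  simp only [sh_fst, add_right_inj] at h1
  have := mul_left_cancel₀ Real.two_pi_pos.ne' h1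
  exact_mod_cast this

lemma cx_sh_sub (k : ℤ) (p q : Strip) : cx (sh k p) - cx (sh k q) = cx p - cx q := by
  apply Complex.ext <;> simp [cx]

lemma cx_rf_sub (p q : Strip) : cx (rf p) - cx (rf q) = -(starRingEnd ℂ) (cx p - cx q) := by
  apply Complex.ext <;> simp [cx] <;> ring

lemma rf_injective : Function.Injective rf := Function.LeftInverse.injective rf_rf

lemma enorm2_polar (x r : ℝ) (hr : 0 ≤ r) : enorm2 (r * Real.sin x, r * Real.cos x) = r := by
  have : (r * Real.sin x) ^ 2 + (r * Real.cos x) ^ 2 = r ^ 2 := by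
    have := Real.sin_sq_add_cos_sq x
    linear_combination r ^ 2 * this
  simp only [enorm2, this, Real.sqrt_sq hr]

/-- The covering map from the strip to the annulus. -/
def proj (p : Strip) : annulus :=
  ⟨((p.2 : ℝ) * Real.sin p.1, (p.2 : ℝ) * Real.cos p.1), by
    have := p.2.2
    simp only [annulus, mem_ofPred_eq]
    rw [enorm2_polar _ _ (by linarith [this.1])]
    exact this⟩

lemma continuous_proj : Continuous proj := by
  refine Continuous.subtype_mk ?_ _
  fun_prop

lemma enorm2_proj (p : Strip) : enorm2 (proj p) = p.2 :=
  enorm2_polar _ _ (by linarith [p.2.2.1])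

@[simp] lemma proj_sh (k : ℤ) (p : Strip) : proj (sh k p) = proj p := by
  apply Subtype.ext
  have h : p.1 + 2 * Real.pi * k = p.1 + k * (2 * Real.pi) := by ring
  simp [proj, h, Real.sin_add_int_mul_two_pi, Real.cos_add_int_mul_two_pi]

@[simp] lemma proj_rf (p : Strip) : proj (rf p) = IA (proj p) := by
  apply Subtype.ext
  simp [proj, IA, refl2]

/-- The complex number `y + ix` attached to a point `(x, y)` of the annulus; its argument is the
angle coordinate of the strip. -/
def pol (z : ℝ × ℝ) : ℂ := ⟨z.2, z.1⟩

lemma continuous_pol : Continuous pol := by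
  have : pol = fun p : ℝ × ℝ => (p.2 : ℂ) + (p.1 : ℝ) * Complex.I := by
    funext p; apply Complex.ext <;> simp [pol]
  rw [this]; fun_prop

lemma norm_pol (z : ℝ × ℝ) : ‖pol z‖ = enorm2 z := by
  rw [Complex.norm_def, Complex.normSq_apply, enorm2]
  congr 1
  simp [pol]; ring

lemma pol_proj (p : Strip) : pol (proj p) = (p.2 : ℝ) * Complex.exp (p.1 * Complex.I) := by
  rw [Complex.exp_mul_I]
  apply Complex.ext <;> simp [pol, proj, Complex.cos_ofReal_re, Complex.sin_ofReal_re]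

lemma pol_injective : Function.Injective pol := by
  intro z w h
  exact Prod.ext (congrArg Complex.im h) (congrArg Complex.re h)

lemma pol_ne_zero (z : annulus) : pol z ≠ 0 := by
  rw [← norm_ne_zero_iff, norm_pol]
  linarith [z.2.1]

lemma proj_eq_proj_iff {p q : Strip} : proj p = proj q ↔ ∃ k : ℤ, p = sh k q := by
  constructor
  · intro h
    have h2 : p.2 = q.2 := by
      apply Subtype.ext
      rw [← enorm2_proj, ← enorm2_proj, h]
    have h1 : pol (proj p) = pol (proj q) := by rw [h]
    rw [pol_proj, pol_proj, h2] at h1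
    have h3 : ((q.2 : ℝ) : ℂ) ≠ 0 := by
      have := q.2.2.1
      exact_mod_cast (by linarith : (q.2 : ℝ) ≠ 0)
    have h4 := mul_left_cancel₀ h3 h1
    obtain ⟨k, hk⟩ := Complex.exp_eq_exp_iff_exists_int.1 h4
    refine ⟨k, Prod.ext ?_ h2⟩
    have := congrArg Complex.im hk
    simp at this
    simp [this]; ring
  · rintro ⟨k, rfl⟩; simp

/-- A measurable section of the covering map. -/
def sec (z : annulus) : Strip :=
  (Complex.arg (pol z), ⟨enorm2 z, z.2⟩)

lemma proj_sec (z : annulus) : proj (sec z) = z := by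
  apply Subtype.ext
  apply pol_injective
  rw [pol_proj]
  simp only [sec, ← norm_pol]
  exact Complex.norm_mul_exp_arg_mul_I _

lemma continuous_enorm2 : Continuous enorm2 := by unfold enorm2; fun_prop

lemma measurable_sec : Measurable sec := by
  refine Measurable.prodMk ?_ ?_
  · exact Complex.measurable_arg.comp (continuous_pol.measurable.comp measurable_subtype_coe)
  · exact Measurable.subtype_mk (continuous_enorm2.measurable.comp measurable_subtype_coe)

lemma isClosed_annulus : IsClosed annulus :=
  (isClosed_le continuous_const continuous_enorm2).inter
    (isClosed_le continuous_enorm2 continuous_const)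

lemma annulus_subset : annulus ⊆ Icc (-2) 2 ×ˢ Icc (-2) 2 := by
  rintro ⟨x, y⟩ ⟨-, h⟩
  have h' : x ^ 2 + y ^ 2 ≤ 2 ^ 2 := (Real.sqrt_le_left (by norm_num)).1 h
  refine ⟨⟨?_, ?_⟩, ⟨?_, ?_⟩⟩ <;> nlinarith [sq_nonneg x, sq_nonneg y]

lemma isCompact_annulus : IsCompact annulus :=
  (isCompact_Icc.prod isCompact_Icc).of_isClosed_subset isClosed_annulus annulus_subset

instance : CompactSpace annulus := isCompact_iff_compactSpace.1 isCompact_annulus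

/-- The area measure of the annulus. -/
abbrev area : Measure annulus := (volume : Measure (ℝ × ℝ)).comap Subtype.val

lemma area_apply (s : Set annulus) :
    area s = volume (Subtype.val '' s) :=
  (MeasurableEmbedding.subtype_coe isClosed_annulus.measurableSet).comap_apply _ _

instance : IsFiniteMeasure area := by
  refine ⟨?_⟩
  rw [area_apply]
  refine (measure_mono (?_ : _ ⊆ annulus)).trans_lt isCompact_annulus.measure_lt_top
  rintro _ ⟨z, -, rfl⟩
  exact z.2

lemma dense_interior_Icc : Dense {c : Icc (1 : ℝ) 2 | 1 < (c : ℝ) ∧ (c : ℝ) < 2} := by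
  intro c
  rw [closure_subtype]
  have : (Subtype.val '' {c : Icc (1 : ℝ) 2 | 1 < (c : ℝ) ∧ (c : ℝ) < 2}) = Ioo 1 2 := by
    ext x
    constructor
    · rintro ⟨y, hy, rfl⟩; exact hy
    · intro hx; exact ⟨⟨x, hx.1.le, hx.2.le⟩, hx, rfl⟩
  rw [this, closure_Ioo (by norm_num)]
  exact c.2

/-- The image of a nonempty open subset of the strip contains a measurable set of positive area. -/
lemma exists_measurable_subset_proj_image {U : Set Strip} (hU : IsOpen U) (hne : U.Nonempty) :
    ∃ V : Set annulus, MeasurableSet V ∧ area V ≠ 0 ∧ V ⊆ proj '' U := by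
  obtain ⟨w, hwU, hw1, hw2⟩ : ∃ w ∈ U, 1 < (w.2 : ℝ) ∧ (w.2 : ℝ) < 2 := by
    obtain ⟨w, hw⟩ := hne
    have hV : IsOpen ((fun c => ((w.1, c) : Strip)) ⁻¹' U) := hU.preimage (by fun_prop)
    obtain ⟨c, hc1, hc2⟩ := dense_interior_Icc.inter_open_nonempty _ hV ⟨w.2, hw⟩
    exact ⟨(w.1, c), hc1, hc2⟩
  set b : ℂ := pol (proj w) with hb
  have hb0 : b ≠ 0 := pol_ne_zero _
  let g : ℝ × ℝ → Strip := fun z =>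
    (w.1 + Complex.arg (pol z / b), projIcc 1 2 (by norm_num) (enorm2 z))
  have hg : ContinuousAt g (proj w : ℝ × ℝ) := by
    refine ContinuousAt.prodMk ?_ ?_
    · refine continuousAt_const.add ?_
      refine ContinuousAt.comp (f := fun z => pol z / b) (g := Complex.arg) ?_
        (continuous_pol.div_const b).continuousAt
      apply Complex.continuousAt_arg
      rw [← hb, div_self hb0]
      simp
    · exact (continuous_projIcc.comp continuous_enorm2).continuousAt
  have hgw : g (proj w) = w := by
    refine Prod.ext ?_ ?_
    · simp [g, ← hb, div_self hb0]
    · simp only [g, enorm2_proj]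
      exact projIcc_of_mem _ w.2.2
  have hN : g ⁻¹' U ∩ annulusInt ∈ nhds (proj w : ℝ × ℝ) := by
    refine Filter.inter_mem (hg (by rw [hgw]; exact hU.mem_nhds hwU)) ?_
    refine IsOpen.mem_nhds ?_ ?_
    · exact (isOpen_lt continuous_const continuous_enorm2).inter
        (isOpen_lt continuous_enorm2 continuous_const)
    · simp only [annulusInt, mem_ofPred_eq, enorm2_proj]; exact ⟨hw1, hw2⟩
  obtain ⟨O, hO, hOo, hwO⟩ := mem_nhds_iff.1 hN
  have hOA : O ⊆ annulus := fun z hz => ⟨(hO hz).2.1.le, (hO hz).2.2.le⟩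
  refine ⟨Subtype.val ⁻¹' O, measurable_subtype_coe hOo.measurableSet, ?_, ?_⟩
  · rw [area_apply, Subtype.image_preimage_coe, inter_eq_right.2 hOA]
    exact (hOo.measure_pos _ ⟨_, hwO⟩).ne'
  · intro z hz
    refine ⟨g z, (hO hz).1, ?_⟩
    apply Subtype.ext
    apply pol_injective
    rw [pol_proj]
    have h1 : ((g z).2 : ℝ) = ‖pol z‖ := by
      simp only [g, norm_pol]
      rw [projIcc_of_mem (by norm_num : (1 : ℝ) ≤ 2) z.2]
    have h2 : ((w.2 : ℝ) : ℂ) ≠ 0 := by exact_mod_cast (by linarith : (w.2 : ℝ) ≠ 0)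
    have h3 : Complex.exp (w.1 * Complex.I) = b / ‖b‖ := by
      rw [hb, norm_pol, enorm2_proj, pol_proj]; field_simp
    have h4 := Complex.norm_mul_exp_arg_mul_I (pol z / b)
    rw [h1]
    simp only [g]
    push_cast
    rw [add_mul, Complex.exp_add, h3]
    rw [norm_div] at h4
    push_cast at h4
    have h5 : (‖b‖ : ℂ) ≠ 0 := by simpa using hb0
    calc (‖pol z‖ : ℂ) * (b / ‖b‖ * Complex.exp (Complex.arg (pol z / b) * Complex.I))
        = b * (‖pol z‖ / ‖b‖ * Complex.exp (Complex.arg (pol z / b) * Complex.I)) := by ring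
      _ = pol z := by rw [h4]; field_simp

/-! ### Reversible lifts -/

/-- `Λ` is a continuous choice of the angle by which `F` turns the difference vector of two distinct
points, normalised to be the obvious choice for horizontally distant points. -/
structure IsTwist (F : Strip → Strip) (Λ : Strip × Strip → ℝ) : Prop where
  continuousOn : ContinuousOn Λ {p | p.1 ≠ p.2}
  swap : ∀ p q, p ≠ q → Λ (p, q) = Λ (q, p)
  spec : ∀ p q, p ≠ q → ∃ ρ : ℝ, 0 < ρ ∧
    cx (F p) - cx (F q) = ρ * Complex.exp (Λ (p, q) * Complex.I) * (cx p - cx q)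
  far : ∃ C : ℝ, ∀ p q : Strip, C < p.1 - q.1 →
    Complex.arg (cx (F p) - cx (F q)) = Complex.arg (cx p - cx q) + Λ (p, q)

lemma IsTwist.comp {F G : Strip → Strip} {Λ M : Strip × Strip → ℝ} (hΛ : IsTwist F Λ)
    (hM : IsTwist G M) (hGc : Continuous G) (hGi : Function.Injective G)
    (hGd : ∃ D : ℝ, ∀ p, |(G p).1 - p.1| ≤ D) :
    IsTwist (F ∘ G) (fun p => Λ (G p.1, G p.2) + M p) := by
  refine ⟨?_, ?_, ?_, ?_⟩
  · refine ContinuousOn.add ?_ hM.continuousOn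
    refine hΛ.continuousOn.comp (f := fun p : Strip × Strip => (G p.1, G p.2)) ?_ ?_
    · fun_prop
    · intro p hp
      exact hGi.ne hp
  · intro p q hpq
    simp only
    rw [hΛ.swap _ _ (hGi.ne hpq), hM.swap _ _ hpq]
  · intro p q hpq
    obtain ⟨r, hr, h1⟩ := hΛ.spec _ _ (hGi.ne hpq)
    obtain ⟨s, hs, h2⟩ := hM.spec _ _ hpq
    refine ⟨r * s, mul_pos hr hs, ?_⟩
    simp only [Function.comp_apply]
    rw [h1, h2]
    push_cast
    rw [add_mul, Complex.exp_add]
    ring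
  · obtain ⟨C, hC⟩ := hΛ.far
    obtain ⟨C', hC'⟩ := hM.far
    obtain ⟨D, hD⟩ := hGd
    refine ⟨max C' (C + 2 * D), fun p q hpq => ?_⟩
    have h1 := hC' p q ((le_max_left _ _).trans_lt hpq)
    have h2 := hC (G p) (G q) (by
      have := (le_max_right C' (C + 2 * D)).trans_lt hpq
      have := abs_le.1 (hD p)
      have := abs_le.1 (hD q)
      linarith)
    simp only [Function.comp_apply]
    rw [h2, h1]; ring

/-- `F` is a lift to the strip of the area preserving map `f` of the annulus, which is reversible and
has a twist function. -/
structure IsRevLift (f : annulus → annulus) (F : Strip → Strip) : Prop where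
  continuous : Continuous F
  semiconj : ∀ p, proj (F p) = f (proj p)
  shift : ∀ k p, F (sh k p) = sh k (F p)
  rev : ∀ p, F (rf (F (rf p))) = p
  mp : MeasurePreserving f area area
  twist : ∃ Λ, IsTwist F Λ

lemma measurePreserving_IA : MeasurePreserving IA area area := by
  have h1 : MeasurePreserving refl2 :=
    (Measure.measurePreserving_neg (volume : Measure ℝ)).prod (MeasurePreserving.id volume)
  have hm : Measurable IA := Measurable.subtype_mk (h1.measurable.comp measurable_subtype_coe)
  refine ⟨hm, Measure.ext fun s hs => ?_⟩
  rw [Measure.map_apply hm hs, area_apply, area_apply]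
  have h2 : MeasurableSet (Subtype.val '' s) :=
    (MeasurableEmbedding.subtype_coe isClosed_annulus.measurableSet).measurableSet_image.2 hs
  rw [← h1.measure_preimage h2.nullMeasurableSet]
  congr 1
  ext z
  constructor
  · rintro ⟨w, hw, rfl⟩
    exact ⟨IA w, hw, rfl⟩
  · rintro ⟨w, hw, he⟩
    have hz : z = refl2 w := by rw [he]; simp [refl2]
    refine ⟨IA w, ?_, hz.symm⟩
    have : IA (IA w) = w := by apply Subtype.ext; simp [IA, refl2]
    simpa [this] using hw

namespace IsRevLift

variable {f g : annulus → annulus} {F G : Strip → Strip}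

lemma rev' (h : IsRevLift f F) (p : Strip) : rf (F (rf (F p))) = p := by
  have := h.rev (rf p)
  rw [rf_rf] at this
  rw [this, rf_rf]

lemma injective (h : IsRevLift f F) : Function.Injective F := by
  intro p q hpq
  rw [← h.rev' p, ← h.rev' q, hpq]

lemma exists_disp_bound (h : IsRevLift f F) : ∃ D : ℝ, ∀ p, |(F p).1 - p.1| ≤ D := by
  have hK : IsCompact (Icc (0 : ℝ) (2 * Real.pi) ×ˢ (univ : Set (Icc (1 : ℝ) 2))) :=
    isCompact_Icc.prod isCompact_univ
  have hc : Continuous fun p : Strip => |(F p).1 - p.1| := by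
    have := h.continuous
    fun_prop
  obtain ⟨D, hD⟩ := (hK.image hc).bddAbove
  refine ⟨D, fun p => ?_⟩
  have hpi := Real.two_pi_pos
  set k : ℤ := ⌊p.1 / (2 * Real.pi)⌋ with hk
  have h1 : (k : ℝ) * (2 * Real.pi) ≤ p.1 := by
    rw [← le_div_iff₀ hpi]; exact Int.floor_le _
  have h2 : p.1 < (k + 1) * (2 * Real.pi) := by
    rw [← div_lt_iff₀ hpi]; exact Int.lt_floor_add_one _
  have := hD ⟨sh (-k) p, ⟨⟨?_, ?_⟩, mem_univ _⟩, rfl⟩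
  · simpa [h.shift] using this
  · simp; linarith
  · simp; linarith

lemma comp (hF : IsRevLift f F) (hG : IsRevLift g G)
    (hrev : ∀ p, F (G (rf (F (G (rf p))))) = p) : IsRevLift (f ∘ g) (F ∘ G) where
  continuous := hF.continuous.comp hG.continuous
  semiconj p := by simp [hF.semiconj, hG.semiconj]
  shift k p := by simp [hF.shift, hG.shift]
  rev := hrev
  mp := hF.mp.comp hG.mp
  twist := by
    obtain ⟨Λ, hΛ⟩ := hF.twist
    obtain ⟨M, hM⟩ := hG.twist
    exact ⟨_, hΛ.comp hM hG.continuous hG.injective hG.exists_disp_bound⟩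

lemma iterate_rev (h : IsRevLift f F) (n : ℕ) (p : Strip) :
    F^[n] (rf (F^[n] (rf p))) = p := by
  have h1 : Function.RightInverse (rf ∘ F ∘ rf) F := h.rev
  have h2 : ∀ q, rf (F^[n] q) = (rf ∘ F ∘ rf)^[n] (rf q) :=
    (Function.Semiconj.iterate_right (f := rf) (fun q => by simp) n)
  rw [h2, rf_rf]
  exact h1.iterate n p

lemma iterate (h : IsRevLift f F) {n : ℕ} (hn : 1 ≤ n) : IsRevLift f^[n] F^[n] := by
  induction n, hn using Nat.le_induction with
  | base => simpa using h
  | succ n hn ih =>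
    rw [Function.iterate_succ, Function.iterate_succ]
    exact ih.comp h (fun p => h.iterate_rev (n + 1) p)

lemma sh_comp (h : IsRevLift f F) (k : ℤ) : IsRevLift f (sh k ∘ F) where
  continuous := (continuous_sh k).comp h.continuous
  semiconj p := by simp [h.semiconj]
  shift l p := by simp [h.shift, sh_sh, add_comm]
  rev p := by simp [rf_sh, h.shift, sh_sh, h.rev]
  mp := h.mp
  twist := by
    obtain ⟨Λ, hΛ⟩ := h.twist
    exact ⟨Λ, hΛ.continuousOn, hΛ.swap, by simpa [cx_sh_sub] using hΛ.spec,
      by simpa [cx_sh_sub] using hΛ.far⟩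

lemma arg_conj_of_pos {z : ℂ} (hz : 0 < z.re) :
    Complex.arg ((starRingEnd ℂ) z) = -Complex.arg z := by
  rw [Complex.arg_conj, if_neg]
  intro h
  have := Complex.arg_eq_pi_iff.1 h
  linarith [this.1]

/-- The reflected map, which is the inverse of `F`, is again a reversible lift. -/
lemma inv (h : IsRevLift f F) : IsRevLift (IA ∘ f ∘ IA) (rf ∘ F ∘ rf) where
  continuous := continuous_rf.comp (h.continuous.comp continuous_rf)
  semiconj p := by simp [h.semiconj]
  shift k p := by simp [rf_sh, h.shift]
  rev p := by
    have := h.rev (rf p)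
    simp only [rf_rf] at this
    simp [this]
  mp := measurePreserving_IA.comp (h.mp.comp measurePreserving_IA)
  twist := by
    obtain ⟨Λ, hΛ⟩ := h.twist
    refine ⟨fun p => -Λ (rf p.1, rf p.2), ?_, ?_, ?_, ?_⟩
    · refine ContinuousOn.neg ?_
      refine hΛ.continuousOn.comp (f := fun p : Strip × Strip => (rf p.1, rf p.2)) ?_ ?_
      · have := continuous_rf
        fun_prop
      · intro p hp
        exact rf_injective.ne hp
    · intro p q hpq
      simp only
      rw [hΛ.swap _ _ (rf_injective.ne hpq)]
    · intro p q hpq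
      obtain ⟨r, hr, h1⟩ := hΛ.spec _ _ (rf_injective.ne hpq)
      refine ⟨r, hr, ?_⟩
      simp only [Function.comp_apply]
      rw [cx_rf_sub, h1, cx_rf_sub]
      simp [← Complex.exp_conj]
      ring
    · obtain ⟨C, hC⟩ := hΛ.far
      obtain ⟨D, hD⟩ := h.exists_disp_bound
      refine ⟨max (max C (2 * D)) 0, fun p q hpq => ?_⟩
      have hpq1 : C < p.1 - q.1 := ((le_max_left _ _).trans (le_max_left _ _)).trans_lt hpq
      have hpq2 : 2 * D < p.1 - q.1 := ((le_max_right _ _).trans (le_max_left _ _)).trans_lt hpq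
      have hpq3 : 0 < p.1 - q.1 := (le_max_right _ _).trans_lt hpq
      have hne : p ≠ q := by rintro rfl; simp at hpq3
      have h1 := hC (rf q) (rf p) (by simp; linarith)
      rw [hΛ.swap _ _ (rf_injective.ne hne.symm)] at h1
      have e1 : ∀ p q : Strip, cx (rf p) - cx (rf q) = (starRingEnd ℂ) (cx q - cx p) := by
        intro p q; rw [cx_rf_sub, ← map_neg, neg_sub]
      have h2 : cx (F (rf q)) - cx (F (rf p)) =
          (starRingEnd ℂ) (cx ((rf ∘ F ∘ rf) p) - cx ((rf ∘ F ∘ rf) q)) := by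
        simp [e1]
      rw [h2, e1, arg_conj_of_pos, arg_conj_of_pos] at h1
      · linarith
      · simpa [cx] using hpq3
      · have := abs_le.1 (hD (rf p))
        have := abs_le.1 (hD (rf q))
        simp only [rf_fst] at *
        simp [cx]; linarith

/-! ### Fixed points on the axis -/

lemma isPreconnected_of_ordConnected {s : Set (Icc (1 : ℝ) 2)} (hs : s.OrdConnected) :
    IsPreconnected s := by
  rw [← Topology.IsInducing.subtypeVal.isPreconnected_image]
  apply Set.OrdConnected.isPreconnected
  refine ⟨?_⟩
  rintro _ ⟨x, hx, rfl⟩ _ ⟨y, hy, rfl⟩ z hz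
  exact ⟨⟨z, x.2.1.trans hz.1, hz.2.trans y.2.2⟩, hs.out hx hy ⟨hz.1, hz.2⟩, rfl⟩

/-- If a point of the axis is mapped to the axis, then there is a fixed point on the axis between
the point and its image. -/
lemma exists_fixed_between (h : IsRevLift f F) {a b : Icc (1 : ℝ) 2}
    (hab : F (0, a) = (0, b)) : ∃ c ∈ uIcc a b, F (0, c) = (0, c) := by
  by_contra! hno
  have hne : a ≠ b := by
    rintro rfl
    exact hno a left_mem_uIcc hab
  obtain ⟨Λ, hΛ⟩ := h.twist
  have hba : F (0, b) = (0, a) := by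
    have := h.rev (0, a)
    rwa [rf_axis, hab, rf_axis] at this
  let v : Icc (1 : ℝ) 2 → ℂ := fun u => cx (F (0, u)) - cx (0, u)
  let L : Icc (1 : ℝ) 2 → ℝ := fun u => Λ ((0, u), rf (F (0, u)))
  have hdist : ∀ u ∈ uIcc a b, ((0, u) : Strip) ≠ rf (F (0, u)) := by
    intro u hu he
    apply hno u hu
    have := congrArg rf he
    rw [rf_rf, rf_axis] at this
    exact this.symm
  have hv : ∀ u ∈ uIcc a b, v u ≠ 0 := by
    intro u hu he
    exact hno u hu (cx_injective (sub_eq_zero.1 he))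
  have hLc : ContinuousOn L (uIcc a b) := by
    refine hΛ.continuousOn.comp (f := fun u => (((0, u) : Strip), rf (F (0, u)))) ?_ hdist
    have := h.continuous
    have := continuous_rf
    fun_prop
  have hvc : Continuous v := by
    have := h.continuous
    have := continuous_cx
    fun_prop
  let w : Icc (1 : ℝ) 2 → ℂ := fun u => v u * Complex.exp (-(L u / 2 : ℝ) * Complex.I)
  have hwc : ContinuousOn (fun u => (w u).re) (uIcc a b) := by
    refine Complex.continuous_re.comp_continuousOn (hvc.continuousOn.mul ?_)
    refine Complex.continuous_exp.comp_continuousOn ?_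
    refine ContinuousOn.mul (ContinuousOn.neg ?_) continuousOn_const
    exact Complex.continuous_ofReal.comp_continuousOn (hLc.div_const 2)
  have hreal : ∀ u ∈ uIcc a b, (w u).im = 0 := by
    intro u hu
    obtain ⟨ρ, hρ, he⟩ := hΛ.spec _ _ (hdist u hu)
    have e1 : F (rf (F (0, u))) = (0, u) := by
      have := h.rev (0, u)
      rwa [rf_axis] at this
    have e2 : cx (0, u) - cx (rf (F (0, u))) = (starRingEnd ℂ) (v u) := by
      apply Complex.ext <;> simp [cx, v] <;> ring
    rw [e1, e2] at he
    have e3 : w u = ρ * (starRingEnd ℂ) (w u) := by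
      have e4 : v u = ρ * Complex.exp (L u * Complex.I) * (starRingEnd ℂ) (v u) := he
      have e5 : (starRingEnd ℂ) (w u) =
          (starRingEnd ℂ) (v u) * Complex.exp ((L u / 2 : ℝ) * Complex.I) := by
        simp only [w, map_mul, ← Complex.exp_conj, map_neg, Complex.conj_ofReal, Complex.conj_I,
          neg_mul_neg]
      have e6 : Complex.exp (L u * Complex.I) * Complex.exp (-(L u / 2 : ℝ) * Complex.I) =
          Complex.exp ((L u / 2 : ℝ) * Complex.I) := by
        rw [← Complex.exp_add]; congr 1; push_cast; ring
      rw [e5]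
      calc w u = v u * Complex.exp (-(L u / 2 : ℝ) * Complex.I) := rfl
        _ = ρ * Complex.exp (L u * Complex.I) * (starRingEnd ℂ) (v u) *
              Complex.exp (-(L u / 2 : ℝ) * Complex.I) := by rw [← e4]
        _ = ρ * ((starRingEnd ℂ) (v u) * (Complex.exp (L u * Complex.I) *
              Complex.exp (-(L u / 2 : ℝ) * Complex.I))) := by ring
        _ = _ := by rw [e6]
    have := congrArg Complex.im e3
    simp at this
    nlinarith
  have hre : ∀ u ∈ uIcc a b, (w u).re ≠ 0 := by
    intro u hu he
    have : w u = 0 := Complex.ext he (hreal u hu)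
    exact hv u hu (by simpa [w] using this)
  have hend : w b = -w a := by
    have hL : L b = L a := by
      simp only [L, hab, hba, rf_axis]
      exact hΛ.swap _ _ (fun he => hne.symm (congrArg Prod.snd he))
    have hvv : v b = -v a := by simp [v, hab, hba]
    simp [w, hL, hvv]
  have hpre : IsPreconnected (uIcc a b) := isPreconnected_of_ordConnected ordConnected_uIcc
  have hre' : (w b).re = -(w a).re := by rw [hend]; simp
  have ha := hre a left_mem_uIcc
  rcases lt_or_gt_of_ne ha with h0 | h0
  · obtain ⟨u, hu, hu0⟩ := hpre.intermediate_value left_mem_uIcc right_mem_uIcc hwc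
      (⟨h0.le, by rw [hre']; linarith⟩ : (0 : ℝ) ∈ Icc _ _)
    exact hre u hu hu0
  · obtain ⟨u, hu, hu0⟩ := hpre.intermediate_value right_mem_uIcc left_mem_uIcc hwc
      (⟨by rw [hre']; linarith, h0.le⟩ : (0 : ℝ) ∈ Icc _ _)
    exact hre u hu hu0

end IsRevLift

/-! ### The flux of a lift -/

/-- The index of the fundamental domain containing a point of the strip. -/
def lev (p : Strip) : ℤ := ⌊p.1 / (2 * Real.pi)⌋

lemma le_lev_iff {p : Strip} {k : ℤ} : k ≤ lev p ↔ 2 * Real.pi * k ≤ p.1 := by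
  rw [lev, Int.le_floor, le_div_iff₀ Real.two_pi_pos, mul_comm]

lemma lev_lt_iff {p : Strip} {k : ℤ} : lev p < k ↔ p.1 < 2 * Real.pi * k := by
  rw [← not_le, le_lev_iff, not_le]

@[simp] lemma lev_sh (k : ℤ) (p : Strip) : lev (sh k p) = lev p + k := by
  rw [lev, lev, ← Int.floor_add_intCast]
  congr 1
  have := Real.pi_pos.ne'
  simp; field_simp

lemma measurable_lev : Measurable lev := by
  unfold lev
  exact (measurable_fst.div_const _).floor

/-- The number of fundamental domains by which a point is displaced. -/
def disp (F : Strip → Strip) (z : annulus) : ℤ := lev (F (sec z)) - lev (sec z)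

/-- The mean displacement. -/
def flux (F : Strip → Strip) : ℝ := ∫ z, (disp F z : ℝ) ∂area

lemma area_univ_pos : 0 < area.real univ := by
  obtain ⟨V, -, hV, -⟩ := exists_measurable_subset_proj_image isOpen_univ
    (⟨(0, ⟨1, by norm_num⟩), mem_univ _⟩ : (univ : Set Strip).Nonempty)
  refine ENNReal.toReal_pos ?_ (measure_ne_top _ _)
  exact fun h => hV (measure_mono_null (subset_univ _) h)

namespace IsRevLift

variable {f g : annulus → annulus} {F G : Strip → Strip}

lemma disp_proj (h : IsRevLift f F) (p : Strip) : disp F (proj p) = lev (F p) - lev p := by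
  obtain ⟨k, hk⟩ := proj_eq_proj_iff.1 (proj_sec (proj p))
  rw [disp, hk, h.shift]
  simp

lemma integrable_disp (h : IsRevLift f F) : Integrable (fun z => (disp F z : ℝ)) area := by
  have hm : Measurable (disp F) :=
    (measurable_lev.comp (h.continuous.measurable.comp measurable_sec)).sub
      (measurable_lev.comp measurable_sec)
  obtain ⟨D, hD⟩ := h.exists_disp_bound
  refine Integrable.of_bound (C := D / (2 * Real.pi) + 1)
    (measurable_from_top.comp hm).aestronglyMeasurable (Filter.Eventually.of_forall fun z => ?_)
  have h1 := abs_le.1 (hD (sec z))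
  have hpi := Real.two_pi_pos
  simp only [disp, lev, Int.cast_sub, Real.norm_eq_abs]
  have a1 := Int.floor_le ((F (sec z)).1 / (2 * Real.pi))
  have a2 := Int.lt_floor_add_one ((F (sec z)).1 / (2 * Real.pi))
  have b1 := Int.floor_le ((sec z).1 / (2 * Real.pi))
  have b2 := Int.lt_floor_add_one ((sec z).1 / (2 * Real.pi))
  have c1 : (F (sec z)).1 / (2 * Real.pi) - (sec z).1 / (2 * Real.pi) ≤ D / (2 * Real.pi) := by
    rw [← sub_div]; gcongr; exact h1.2
  have c2 : -(D / (2 * Real.pi)) ≤ (F (sec z)).1 / (2 * Real.pi) - (sec z).1 / (2 * Real.pi) := by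
    rw [← sub_div, ← neg_div]; gcongr; exact h1.1
  rw [abs_le]
  constructor <;> linarith

lemma flux_comp (hF : IsRevLift f F) (hG : IsRevLift g G) :
    flux (F ∘ G) = flux F + flux G := by
  have h1 : ∀ z, (disp (F ∘ G) z : ℝ) = disp F (g z) + disp G z := by
    intro z
    have : g z = proj (G (sec z)) := by rw [hG.semiconj, proj_sec]
    rw [this, hF.disp_proj]
    simp [disp]
  have h2 : ∫ z, (disp F (g z) : ℝ) ∂area = flux F := by
    have := integral_map (μ := area) hG.mp.measurable.aemeasurable
      (f := fun z => (disp F z : ℝ)) (by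
        rw [hG.mp.map_eq]; exact hF.integrable_disp.aestronglyMeasurable)
    rw [← this, hG.mp.map_eq, flux]
  have h3 : Integrable (fun z => (disp F (g z) : ℝ)) area :=
    hG.mp.integrable_comp_of_integrable hF.integrable_disp
  rw [flux, flux.eq_1 G, ← h2, ← integral_add h3 hG.integrable_disp]
  simp [h1]

lemma flux_iterate (h : IsRevLift f F) {n : ℕ} (hn : 1 ≤ n) : flux F^[n] = n * flux F := by
  induction n, hn using Nat.le_induction with
  | base => simp
  | succ n hn ih =>
    rw [Function.iterate_succ, (h.iterate hn).flux_comp h, ih]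
    push_cast; ring

lemma flux_sh_comp (h : IsRevLift f F) (k : ℤ) :
    flux (sh k ∘ F) = flux F + k * area.real univ := by
  have h1 : ∀ z, (disp (sh k ∘ F) z : ℝ) = disp F z + k := by
    intro z
    simp [disp]; ring
  rw [flux, flux]
  simp only [h1]
  rw [integral_add h.integrable_disp (integrable_const _)]
  simp [mul_comm]

lemma flux_inv (h : IsRevLift f F) : flux (rf ∘ F ∘ rf) = -flux F := by
  have h1 := h.flux_comp h.inv
  have h2 : F ∘ rf ∘ F ∘ rf = id := by funext p; exact h.rev p
  rw [h2] at h1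
  have h3 : flux id = 0 := by simp [flux, disp]
  linarith

/-! ### Lifts without interior fixed points on the axis -/

lemma fst_neg_of_axis_nonneg (h : IsRevLift f F) (h0 : ∀ c, 0 ≤ (F (0, c)).1) {p : Strip}
    (hp : p.1 < 0) : (rf (F (rf p))).1 < 0 := by
  have hpre : IsPreconnected (Iio (0 : ℝ) ×ˢ (univ : Set (Icc (1 : ℝ) 2))) :=
    isPreconnected_Iio.prod (isPreconnected_of_ordConnected ordConnected_univ)
  have hc : ContinuousOn (fun p : Strip => (rf (F (rf p))).1)
      (Iio (0 : ℝ) ×ˢ (univ : Set (Icc (1 : ℝ) 2))) :=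
    (continuous_fst.comp h.inv.continuous).continuousOn
  obtain ⟨D, hD⟩ := h.inv.exists_disp_bound
  have hD0 : 0 ≤ D := (abs_nonneg _).trans (hD p)
  by_contra! hge
  obtain ⟨u, hu, hu0⟩ := hpre.intermediate_value
    (a := (-(D + 1), p.2)) (b := p) ⟨by simp; linarith, mem_univ _⟩ ⟨hp, mem_univ _⟩ hc
    (⟨by
      have := abs_le.1 (hD (-(D + 1), p.2))
      simp only [Function.comp_apply] at this
      linarith [this.2], hge⟩ : (0 : ℝ) ∈ Icc _ _)
  have h1 := h.rev u
  have h2 : rf (F (rf u)) = (0, (rf (F (rf u))).2) := Prod.ext hu0 rfl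
  rw [h2] at h1
  have h3 := h0 (rf (F (rf u))).2
  rw [h1] at h3
  exact absurd hu.1 (not_lt.2 h3)

lemma lev_le_of_fst_neg (h : IsRevLift f F) (h0 : ∀ p : Strip, p.1 < 0 → (F p).1 < 0)
    (p : Strip) : lev (F p) ≤ lev p := by
  rw [← Int.lt_add_one_iff, lev_lt_iff]
  have h1 : p.1 < 2 * Real.pi * ((lev p + 1 : ℤ) : ℝ) := lev_lt_iff.1 (by omega)
  have h2 := h0 (sh (-(lev p + 1)) p) (by simp at h1 ⊢; linarith)
  rw [h.shift] at h2
  simp at h2 ⊢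
  linarith

lemma lev_le_of_axis_nonpos (h : IsRevLift f F) (h0 : ∀ c, (F (0, c)).1 ≤ 0) (p : Strip) :
    lev (F p) ≤ lev p := by
  refine h.lev_le_of_fst_neg (fun p hp => ?_) p
  have := h.inv.fst_neg_of_axis_nonneg (fun c => by simpa using h0 c) hp
  simpa using this

lemma lev_le_of_axis_nonneg (h : IsRevLift f F) (h0 : ∀ c, 0 ≤ (F (0, c)).1) (p : Strip) :
    lev p ≤ lev (F p) := by
  have := h.inv.lev_le_of_fst_neg (fun p hp => h.fst_neg_of_axis_nonneg h0 hp) (F p)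
  simpa [h.rev'] using this

lemma flux_pos_of_axis_nonneg (h : IsRevLift f F) (h0 : ∀ c, 0 ≤ (F (0, c)).1)
    (h1 : ∃ c, 0 < (F (0, c)).1) : 0 < flux F := by
  have hnn : ∀ z, (0 : ℝ) ≤ disp F z := by
    intro z
    have := h.lev_le_of_axis_nonneg h0 (sec z)
    simp only [disp]
    exact_mod_cast sub_nonneg.2 this
  have hFc := h.continuous
  let U : Set Strip := {p | p.1 < 0} ∩ {p | -(2 * Real.pi) < p.1} ∩ {p | 0 < (F p).1}
  have hU : IsOpen U := ((isOpen_lt (by fun_prop) (by fun_prop)).inter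
    (isOpen_lt (by fun_prop) (by fun_prop))).inter (isOpen_lt (by fun_prop) (by fun_prop))
  have hUne : U.Nonempty := by
    obtain ⟨c, hc⟩ := h1
    have hV : IsOpen ({x : ℝ | -(2 * Real.pi) < x} ∩ {x : ℝ | 0 < (F (x, c)).1}) :=
      (isOpen_lt (by fun_prop) (by fun_prop)).inter (isOpen_lt (by fun_prop) (by fun_prop))
    have h0V : (0 : ℝ) ∈ ({x : ℝ | -(2 * Real.pi) < x} ∩ {x : ℝ | 0 < (F (x, c)).1}) :=
      ⟨neg_neg_of_pos Real.two_pi_pos, hc⟩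
    have hcl : (0 : ℝ) ∈ closure (Iio 0) := by rw [closure_Iio]; simp
    obtain ⟨x, hx, hx0⟩ := mem_closure_iff.1 hcl _ hV h0V
    exact ⟨(x, c), ⟨hx0, hx.1⟩, hx.2⟩
  obtain ⟨V, hVm, hV0, hVU⟩ := exists_measurable_subset_proj_image hU hUne
  rw [flux, integral_pos_iff_support_of_nonneg hnn h.integrable_disp]
  refine (pos_iff_ne_zero.2 hV0).trans_le (measure_mono ?_)
  intro z hz
  obtain ⟨p, ⟨⟨hp1, hp2⟩, hp3⟩, rfl⟩ := hVU hz
  have e1 : lev p < 0 := lev_lt_iff.2 (by simpa using hp1)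
  have e2 : 0 ≤ lev (F p) := le_lev_iff.2 (by simpa using hp3.le)
  simp only [Function.mem_support, h.disp_proj]
  exact_mod_cast (by omega : lev (F p) - lev p ≠ 0)

lemma axis_fst_ne_zero (h : IsRevLift f F)
    (hno : ∀ c : Icc (1 : ℝ) 2, 1 < (c : ℝ) → (c : ℝ) < 2 → F (0, c) ≠ (0, c))
    (c : Icc (1 : ℝ) 2) (h1 : 1 < (c : ℝ)) (h2 : (c : ℝ) < 2) : (F (0, c)).1 ≠ 0 := by
  intro h0
  set b := (F (0, c)).2 with hb
  have hcb : F (0, c) = (0, b) := Prod.ext h0 rfl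
  obtain ⟨d, hd, hfix⟩ := h.exists_fixed_between hcb
  have hdb : d = b := by
    by_contra hne
    have hne' : (d : ℝ) ≠ b := fun h => hne (Subtype.ext h)
    have hb1 := b.2.1
    have hb2 := b.2.2
    rcases mem_uIcc.1 hd with hd | hd
    · have e1 : (c : ℝ) ≤ d := hd.1
      have e2 : (d : ℝ) ≤ b := hd.2
      have := lt_of_le_of_ne e2 hne'
      exact hno d (by linarith) (by linarith) hfix
    · have e1 : (b : ℝ) ≤ d := hd.1
      have e2 : (d : ℝ) ≤ c := hd.2
      have := lt_of_le_of_ne e1 hne'.symm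
      exact hno d (by linarith) (by linarith) hfix
  rw [hdb] at hfix
  have hcd : c = b := congrArg Prod.snd (h.injective (hcb.trans hfix.symm))
  exact hno c h1 h2 (hcb.trans (by rw [← hcd]))

/-- A lift without interior fixed points on the axis moves all points weakly to one side. -/
lemma lev_dichotomy (h : IsRevLift f F)
    (hno : ∀ c : Icc (1 : ℝ) 2, 1 < (c : ℝ) → (c : ℝ) < 2 → F (0, c) ≠ (0, c)) :
    ((∀ p, lev p ≤ lev (F p)) ∧ 0 < flux F) ∨ ((∀ p, lev (F p) ≤ lev p) ∧ flux F < 0) := by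
  set S : Set (Icc (1 : ℝ) 2) := {c : Icc (1 : ℝ) 2 | 1 < (c : ℝ) ∧ (c : ℝ) < 2} with hS
  have hFc := h.continuous
  have hne : ∀ c ∈ S, (F (0, c)).1 ≠ 0 := fun c hc => h.axis_fst_ne_zero hno c hc.1 hc.2
  have hpre : IsPreconnected S := by
    apply isPreconnected_of_ordConnected
    refine ⟨fun x hx y hy z hz => ⟨?_, ?_⟩⟩
    · exact hx.1.trans_le hz.1
    · exact (show (z : ℝ) ≤ y from hz.2).trans_lt hy.2
  have hc : Continuous fun c : Icc (1 : ℝ) 2 => (F (0, c)).1 := by fun_prop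
  let m : Icc (1 : ℝ) 2 := ⟨3 / 2, by norm_num⟩
  have hm : m ∈ S := ⟨by norm_num [m], by norm_num [m]⟩
  rcases lt_or_gt_of_ne (hne m hm) with hs | hs
  · right
    have h0 : ∀ c, (F (0, c)).1 ≤ 0 := by
      have hcl : IsClosed {c : Icc (1 : ℝ) 2 | (F (0, c)).1 ≤ 0} :=
        isClosed_le hc continuous_const
      have hsub : S ⊆ {c : Icc (1 : ℝ) 2 | (F (0, c)).1 ≤ 0} := by
        intro c hcS
        by_contra hlt
        obtain ⟨u, hu, hu0⟩ := hpre.intermediate_value hm hcS hc.continuousOn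
          (⟨hs.le, (not_le.1 hlt).le⟩ : (0 : ℝ) ∈ Icc _ _)
        exact hne u hu hu0
      intro c
      exact (hcl.closure_subset_iff.2 hsub) (dense_interior_Icc c)
    refine ⟨h.lev_le_of_axis_nonpos h0, ?_⟩
    have := h.inv.flux_pos_of_axis_nonneg (fun c => by simpa using h0 c) ⟨m, by simpa using hs⟩
    rw [h.flux_inv] at this
    linarith
  · left
    have h0 : ∀ c, 0 ≤ (F (0, c)).1 := by
      have hcl : IsClosed {c : Icc (1 : ℝ) 2 | 0 ≤ (F (0, c)).1} :=
        isClosed_le continuous_const hc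
      have hsub : S ⊆ {c : Icc (1 : ℝ) 2 | 0 ≤ (F (0, c)).1} := by
        intro c hcS
        by_contra hlt
        obtain ⟨u, hu, hu0⟩ := hpre.intermediate_value hcS hm hc.continuousOn
          (⟨(not_le.1 hlt).le, hs.le⟩ : (0 : ℝ) ∈ Icc _ _)
        exact hne u hu hu0
      intro c
      exact (hcl.closure_subset_iff.2 hsub) (dense_interior_Icc c)
    exact ⟨h.lev_le_of_axis_nonneg h0, h.flux_pos_of_axis_nonneg h0 ⟨m, hs⟩⟩

end IsRevLift

/-! ### Angles around a fixed point of the axis -/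

lemma eq_of_isPreconnected_of_discrete {α : Type*} [TopologicalSpace α] {S : Set α}
    (hS : IsPreconnected S) {b : α → ℝ} (hb : ContinuousOn b S) {a : ℝ}
    (hd : ∀ y ∈ S, ∃ j : ℤ, b y = a + 2 * Real.pi * j) {x y : α} (hx : x ∈ S) (hy : y ∈ S) :
    b x = b y := by
  have key : ∀ x ∈ S, ∀ y ∈ S, ¬ b x < b y := by
    intro x hx y hy hlt
    obtain ⟨j, hj⟩ := hd x hx
    obtain ⟨k, hk⟩ := hd y hy
    have hpi := Real.two_pi_pos
    have hjk : j + 1 ≤ k := by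
      rw [hj, hk] at hlt
      have : (j : ℝ) < k := by
        by_contra! hle
        nlinarith
      exact_mod_cast this
    have hjk' : (j : ℝ) + 1 ≤ k := by exact_mod_cast hjk
    obtain ⟨u, hu, he⟩ := hS.intermediate_value hx hy hb
      (⟨by rw [hj]; nlinarith, by rw [hk]; nlinarith⟩ :
        a + 2 * Real.pi * (j + 1 / 2) ∈ Icc _ _)
    obtain ⟨l, hl⟩ := hd u hu
    rw [hl] at he
    have h1 : (l : ℝ) = j + 1 / 2 := mul_left_cancel₀ hpi.ne' (by linarith)
    have h2 : 2 * l = 2 * j + 1 := by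
      have : (2 * l : ℝ) = 2 * j + 1 := by linarith
      exact_mod_cast this
    omega
  exact le_antisymm (not_lt.1 (key y hy x hx)) (not_lt.1 (key x hx y hy))

/-- The angle at which a point is seen from `(0, q)`, measured from the upward vertical direction;
it jumps on the part of the axis below `(0, q)`. -/
def ang (q : Icc (1 : ℝ) 2) (z : Strip) : ℝ := Complex.arg (-Complex.I * (cx z - cx (0, q)))

/-- The complement of the part of the axis below `(0, q)`. -/
def slit (q : Icc (1 : ℝ) 2) : Set Strip := {z | z.1 < 0} ∪ {z | q < z.2} ∪ {z | 0 < z.1}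

lemma mem_slit_iff {q : Icc (1 : ℝ) 2} {z : Strip} : z ∈ slit q ↔ z.1 ≠ 0 ∨ q < z.2 := by
  simp only [slit, mem_union, mem_ofPred_eq, ne_iff_lt_or_gt]
  tauto

lemma isOpen_slit (q : Icc (1 : ℝ) 2) : IsOpen (slit q) :=
  ((isOpen_lt continuous_fst continuous_const).union
    (isOpen_lt continuous_const continuous_snd)).union (isOpen_lt continuous_const continuous_fst)

lemma isPreconnected_slit {q : Icc (1 : ℝ) 2} (hq : (q : ℝ) < 2) : IsPreconnected (slit q) := by
  have h1 : IsPreconnected {z : Strip | z.1 < 0} := by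
    have := (isPreconnected_Iio (a := (0 : ℝ))).prod
      (IsRevLift.isPreconnected_of_ordConnected ordConnected_univ)
    convert this using 1
    ext z; simp
  have h2 : IsPreconnected {z : Strip | 0 < z.1} := by
    have := (isPreconnected_Ioi (a := (0 : ℝ))).prod
      (IsRevLift.isPreconnected_of_ordConnected ordConnected_univ)
    convert this using 1
    ext z; simp
  have h3 : IsPreconnected {z : Strip | q < z.2} := by
    have := (isPreconnected_univ (α := ℝ)).prod
      (IsRevLift.isPreconnected_of_ordConnected (ordConnected_Ioi (a := q)))
    convert this using 1
    ext z; simp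
  let t : Icc (1 : ℝ) 2 := ⟨2, by norm_num⟩
  have ht : q < t := hq
  refine (h1.union (-1, t) (by norm_num) ht h3).union (1, t) (Or.inr ht) (by norm_num) h2

lemma mem_slitPlane_of_mem_slit {q : Icc (1 : ℝ) 2} {z : Strip} (hz : z ∈ slit q) :
    -Complex.I * (cx z - cx (0, q)) ∈ Complex.slitPlane := by
  rw [mem_slit_iff] at hz
  rw [Complex.mem_slitPlane_iff]
  rcases hz with h | h
  · right; simpa [cx] using h
  · left
    have : (q : ℝ) < z.2 := h
    simpa [cx] using this

lemma continuousOn_ang (q : Icc (1 : ℝ) 2) : ContinuousOn (ang q) (slit q) := by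
  refine Complex.continuousOn_arg.comp (f := fun z => -Complex.I * (cx z - cx (0, q))) ?_
    (fun z hz => mem_slitPlane_of_mem_slit hz)
  have := continuous_cx
  fun_prop

lemma ang_neg {q : Icc (1 : ℝ) 2} {z : Strip} (hz : 0 < z.1) : ang q z < 0 := by
  rw [ang, Complex.arg_neg_iff]
  simpa [cx] using hz

lemma ang_pos {q : Icc (1 : ℝ) 2} {z : Strip} (hz : z.1 < 0) : 0 < ang q z := by
  refine lt_of_le_of_ne (Complex.arg_nonneg_iff.2 (by simpa [cx] using hz.le)) (fun h => ?_)
  have := (Complex.arg_eq_zero_iff.1 h.symm).2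
  simp [cx] at this
  linarith

lemma ne_of_mem_slit {q : Icc (1 : ℝ) 2} {z : Strip} (hz : z ∈ slit q) : z ≠ (0, q) := by
  rintro rfl
  simp [mem_slit_iff] at hz

namespace IsTwist

variable {F : Strip → Strip} {Λ : Strip × Strip → ℝ} {q : Icc (1 : ℝ) 2}

lemma exists_polar (hΛ : IsTwist F Λ) (hq : F (0, q) = (0, q)) {z : Strip} (hz : z ≠ (0, q)) :
    ∃ r : ℝ, 0 < r ∧ -Complex.I * (cx (F z) - cx (0, q)) =
      r * Complex.exp ((ang q z + Λ (z, (0, q)) : ℝ) * Complex.I) := by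
  obtain ⟨ρ, hρ, h⟩ := hΛ.spec _ _ hz
  have h0 : -Complex.I * (cx z - cx (0, q)) ≠ 0 := by
    refine mul_ne_zero (by simp) (sub_ne_zero.2 (cx_injective.ne hz))
  refine ⟨ρ * ‖-Complex.I * (cx z - cx (0, q))‖, mul_pos hρ (norm_pos_iff.2 h0), ?_⟩
  rw [hq] at h
  have h1 := Complex.norm_mul_exp_arg_mul_I (-Complex.I * (cx z - cx (0, q)))
  rw [h]
  push_cast
  rw [add_mul, Complex.exp_add]
  change _ = _ * _ * (Complex.exp (Complex.arg (-Complex.I * (cx z - cx (0, q))) * Complex.I) * _)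
  linear_combination (-(ρ : ℂ) * Complex.exp (Λ (z, (0, q)) * Complex.I)) * h1

lemma exists_int (hΛ : IsTwist F Λ) (hF : Function.Injective F) (hq : F (0, q) = (0, q))
    {z : Strip} (hz : z ≠ (0, q)) :
    ∃ k : ℤ, ang q z + Λ (z, (0, q)) = ang q (F z) + 2 * Real.pi * k := by
  obtain ⟨r, hr, h⟩ := hΛ.exists_polar hq hz
  have h0 : -Complex.I * (cx (F z) - cx (0, q)) ≠ 0 := by
    refine mul_ne_zero (by simp) (sub_ne_zero.2 (cx_injective.ne ?_))
    rw [← hq]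
    exact hF.ne hz
  have h1 := exp_angle_eq_of_norm_mul_eq hr (norm_pos_iff.2 h0) h
    (Complex.norm_mul_exp_arg_mul_I _).symm
  obtain ⟨k, hk⟩ := Complex.exp_eq_exp_iff_exists_int.1 h1
  refine ⟨k, ?_⟩
  have := congrArg Complex.im hk
  simp at this
  rw [this, ang]
  simp; ring

lemma axis_of_eq (hΛ : IsTwist F Λ) (hq : F (0, q) = (0, q)) {z : Strip} (hz : z ≠ (0, q)) {j : ℤ}
    (hj : ang q z + Λ (z, (0, q)) = Real.pi + 2 * Real.pi * j) :
    (F z).1 = 0 ∧ (F z).2 < q := by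
  obtain ⟨r, hr, h⟩ := hΛ.exists_polar hq hz
  have he : Complex.exp ((Real.pi + 2 * Real.pi * j : ℝ) * Complex.I) = -1 := by
    have : ((Real.pi + 2 * Real.pi * j : ℝ) * Complex.I : ℂ) =
        Real.pi * Complex.I + j * (2 * Real.pi * Complex.I) := by push_cast; ring
    rw [this, Complex.exp_periodic.int_mul j, Complex.exp_pi_mul_I]
  rw [hj, he] at h
  have h1 := congrArg Complex.re h
  have h2 := congrArg Complex.im h
  simp [cx] at h1 h2
  refine ⟨h2, ?_⟩
  change ((F z).2 : ℝ) < q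
  linarith

lemma continuousOn_turn (hΛ : IsTwist F Λ) (q : Icc (1 : ℝ) 2) :
    ContinuousOn (fun z => ang q z + Λ (z, (0, q))) (slit q) := by
  refine (continuousOn_ang q).add ?_
  exact hΛ.continuousOn.comp (f := fun z : Strip => (z, ((0, q) : Strip))) (by fun_prop)
    (fun z hz => ne_of_mem_slit hz)

lemma iterate (hΛ : IsTwist F Λ) (hFc : Continuous F) (hFi : Function.Injective F)
    (hFd : ∃ D : ℝ, ∀ p, |(F p).1 - p.1| ≤ D) (n : ℕ) :
    IsTwist F^[n] (fun p => ∑ i ∈ Finset.range n, Λ (F^[i] p.1, F^[i] p.2)) := by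
  induction n with
  | zero =>
    refine ⟨by simpa using continuousOn_const, by simp, fun p q _ => ⟨1, by simp⟩, 0, by simp⟩
  | succ n ih =>
    simp only [Finset.sum_range_succ']
    exact ih.comp hΛ hFc hFi hFd

end IsTwist

namespace IsRevLift

variable {f : annulus → annulus} {F : Strip → Strip} {Λ : Strip × Strip → ℝ} {q : Icc (1 : ℝ) 2}

/-- The preimage of the part of the axis below the lowest interior fixed point stays away from
that part of the axis. -/
lemma rf_mem_slit (h : IsRevLift f F)
    (hlow : ∀ y : Icc (1 : ℝ) 2, 1 < (y : ℝ) → y < q → F (0, y) ≠ (0, y))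
    {y : Icc (1 : ℝ) 2} (hyq : y < q) (hy : F (0, y) ≠ (0, y)) : rf (F (0, y)) ∈ slit q := by
  by_contra hmem
  rw [mem_slit_iff] at hmem
  push Not at hmem
  obtain ⟨h1, h2⟩ := hmem
  simp only [rf_fst, neg_eq_zero, rf_snd] at h1 h2
  set b := (F (0, y)).2 with hb
  have hyb : F (0, y) = (0, b) := Prod.ext h1 rfl
  obtain ⟨c, hc, hfix⟩ := h.exists_fixed_between hyb
  have hcy : c ≠ y := by rintro rfl; exact hy hfix
  have hcb : c ≠ b := by
    rintro rfl
    exact hcy (congrArg Prod.snd (h.injective (hfix.trans hyb.symm)))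
  have key : 1 < (c : ℝ) ∧ c < q := by
    rcases mem_uIcc.1 hc with hc | hc
    · exact ⟨y.2.1.trans_lt (show y < c from lt_of_le_of_ne hc.1 hcy.symm),
        (lt_of_le_of_ne hc.2 hcb).trans_le h2⟩
    · exact ⟨b.2.1.trans_lt (show b < c from lt_of_le_of_ne hc.1 hcb.symm),
        (lt_of_le_of_ne hc.2 hcy).trans hyq⟩
  exact hlow c key.1 key.2 hfix

/-- The total turning angle around the lowest interior fixed point is bounded by a constant which
does not depend on the map. -/
lemma exists_turn_bounds (h : IsRevLift f F) (hΛ : IsTwist F Λ) (hq : F (0, q) = (0, q))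
    (hq1 : 1 < (q : ℝ)) (hq2 : (q : ℝ) < 2)
    (hlow : ∀ y : Icc (1 : ℝ) 2, 1 < (y : ℝ) → y < q → F (0, y) ≠ (0, y)) :
    ∃ j : ℤ, (j = 0 ∨ j = -1) ∧
      (∀ z ∈ slit q, 2 * Real.pi * j - Real.pi < ang q z + Λ (z, (0, q)) ∧
        ang q z + Λ (z, (0, q)) < 2 * Real.pi * j + 3 * Real.pi) ∧
      ∃ z ∈ slit q, ang q z + Λ (z, (0, q)) = Real.pi + 2 * Real.pi * j ∧ (F z).1 = 0 := by
  set β : Strip → ℝ := fun z => ang q z + Λ (z, (0, q)) with hβ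
  have hβc : ContinuousOn β (slit q) := hΛ.continuousOn_turn q
  have hFc := h.continuous
  let J : Set (Icc (1 : ℝ) 2) := {y | y < q ∧ F (0, y) ≠ (0, y)}
  have hFrf : ∀ y : Icc (1 : ℝ) 2, F (rf (F (0, y))) = (0, y) := by
    intro y
    have := h.rev (0, y)
    rwa [rf_axis] at this
  have hJ : IsPreconnected J := by
    apply isPreconnected_of_ordConnected
    refine ⟨fun x hx y hy z hz => ⟨hz.2.trans_lt hy.1, ?_⟩⟩
    rcases eq_or_lt_of_le hz.1 with rfl | hlt
    · exact hx.2
    · exact hlow z (x.2.1.trans_lt hlt) (hz.2.trans_lt hy.1)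
  have hJc : ContinuousOn (fun y => β (rf (F (0, y)))) J := by
    refine hβc.comp (f := fun y : Icc (1 : ℝ) 2 => rf (F (0, y))) ?_
      (fun y hy => h.rf_mem_slit hlow hy.1 hy.2)
    have := continuous_rf
    fun_prop
  have hJd : ∀ y ∈ J, ∃ j : ℤ, β (rf (F (0, y))) = Real.pi + 2 * Real.pi * j := by
    intro y hy
    obtain ⟨k, hk⟩ := hΛ.exists_int h.injective hq
      (ne_of_mem_slit (h.rf_mem_slit hlow hy.1 hy.2))
    refine ⟨k, hk.trans ?_⟩
    rw [hFrf]
    congr 1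
    rw [ang, Complex.arg_eq_pi_iff]
    have : (y : ℝ) < q := hy.1
    simpa [cx] using this
  let m : Icc (1 : ℝ) 2 := ⟨(1 + q) / 2, by linarith, by linarith⟩
  have hmq : m < q := by
    change (1 + (q : ℝ)) / 2 < q
    linarith
  have hm : m ∈ J := ⟨hmq, hlow m (by change 1 < (1 + (q : ℝ)) / 2; linarith) hmq⟩
  obtain ⟨j, hj⟩ := hJd m hm
  have hz1 := h.rf_mem_slit hlow hm.1 hm.2
  have honly : ∀ z ∈ slit q, ∀ k : ℤ, β z = Real.pi + 2 * Real.pi * k → k = j := by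
    intro z hz k hk
    obtain ⟨e1, e2⟩ := hΛ.axis_of_eq hq (ne_of_mem_slit hz) hk
    set y := (F z).2 with hy
    have hFz : F z = (0, y) := Prod.ext e1 rfl
    have hzy : z = rf (F (0, y)) := h.injective (by rw [hFz, hFrf])
    have hyJ : y ∈ J := by
      refine ⟨e2, fun hfix => ?_⟩
      have : z = (0, y) := h.injective (hFz.trans hfix.symm)
      rw [this, mem_slit_iff] at hz
      rcases hz with hz | hz
      · exact hz rfl
      · exact absurd e2 (not_lt.2 (le_of_lt hz))
    have := eq_of_isPreconnected_of_discrete hJ hJc hJd hyJ hm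
    simp only [← hzy] at this
    rw [hk, hj] at this
    have h3 : (k : ℝ) = j := mul_left_cancel₀ Real.two_pi_pos.ne' (by linarith)
    exact_mod_cast h3
  have hpre := isPreconnected_slit hq2
  have hpi := Real.pi_pos
  have hbounds : ∀ z ∈ slit q, 2 * Real.pi * j - Real.pi < β z ∧
      β z < 2 * Real.pi * j + 3 * Real.pi := by
    intro z hz
    constructor
    · by_contra! hle
      obtain ⟨u, hu, he⟩ := hpre.intermediate_value hz hz1 hβc
        (⟨by push_cast; linarith, by rw [hj]; push_cast; linarith⟩ :
          Real.pi + 2 * Real.pi * ((j - 1 : ℤ) : ℝ) ∈ Icc _ _)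
      have := honly u hu _ he
      omega
    · by_contra! hle
      obtain ⟨u, hu, he⟩ := hpre.intermediate_value hz1 hz hβc
        (⟨by rw [hj]; push_cast; linarith, by push_cast; linarith⟩ :
          Real.pi + 2 * Real.pi * ((j + 1 : ℤ) : ℝ) ∈ Icc _ _)
      have := honly u hu _ he
      omega
  refine ⟨j, ?_, hbounds, _, hz1, hj, by rw [hFrf]⟩
  obtain ⟨C, hC⟩ := hΛ.far
  obtain ⟨D, hD⟩ := h.exists_disp_bound
  set x : ℝ := max (max C D) 0 + 1 with hx
  have hxC : C < x := by
    have := (le_max_left C D).trans (le_max_left _ 0)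
    linarith
  have hxD : D < x := by
    have := (le_max_right C D).trans (le_max_left _ 0)
    linarith
  have hx0 : 0 < x := by
    have := le_max_right (max C D) 0
    linarith
  have e1 := hC (x, q) (0, q) (by simpa using hxC)
  have e2 : cx (x, q) - cx (0, q) = (x : ℂ) := by apply Complex.ext <;> simp [cx]
  rw [hq, e2, Complex.arg_ofReal_of_nonneg hx0.le, zero_add] at e1
  have e3 : |Λ ((x, q), (0, q))| < Real.pi / 2 := by
    rw [← e1, Complex.abs_arg_lt_pi_div_two_iff]
    left
    have := abs_le.1 (hD (x, q))
    simp [cx]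
    linarith
  have e4 : ang q (x, q) = -(Real.pi / 2) := by
    have : -Complex.I * (cx (x, q) - cx (0, q)) = (x : ℂ) * (-Complex.I) := by rw [e2]; ring
    rw [ang, this, Complex.arg_real_mul _ hx0, Complex.arg_neg_I]
  have e5 := hbounds (x, q) (mem_slit_iff.2 (Or.inl hx0.ne'))
  simp only [hβ, e4] at e5
  have e6 := abs_lt.1 e3
  have j1 : (-2 : ℝ) < j := by
    by_contra! hle
    nlinarith
  have j2 : (j : ℝ) < 1 := by
    by_contra! hle
    nlinarith
  have j1' : -2 < j := by exact_mod_cast j1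
  have j2' : j < 1 := by exact_mod_cast j2
  omega

end IsRevLift

namespace IsRevLift

variable {f : annulus → annulus} {F : Strip → Strip} {Λ : Strip × Strip → ℝ} {q : Icc (1 : ℝ) 2}

lemma iterate_shift (h : IsRevLift f F) (n : ℕ) (k : ℤ) (p : Strip) :
    F^[n] (sh k p) = sh k (F^[n] p) :=
  Function.Commute.iterate_left (f := F) (g := sh k) (h.shift k) n p

lemma iterate_semiconj (h : IsRevLift f F) (n : ℕ) (p : Strip) :
    proj (F^[n] p) = f^[n] (proj p) :=
  Function.Semiconj.iterate_right (f := proj) h.semiconj n p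

lemma area_axis_eq_zero : area {z : annulus | (z : ℝ × ℝ).1 = 0} = 0 := by
  rw [area_apply]
  refine measure_mono_null (t := ({0} : Set ℝ) ×ˢ (univ : Set ℝ)) ?_ ?_
  · rintro _ ⟨z, hz, rfl⟩
    exact ⟨hz, mem_univ _⟩
  · rw [Measure.volume_eq_prod, Measure.prod_prod]
    simp

/-- Poincaré recurrence, lifted to the strip for maps with bounded displacements. -/
lemma exists_recurrent_orbit (h : IsRevLift f F) {B : ℝ}
    (hB : ∀ n p, |(F^[n] p).1 - p.1| ≤ B) {U : Set Strip} (hU : IsOpen U) (hne : U.Nonempty)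
    {x : ℝ} (hx : ∀ u ∈ U, |u.1 - x| ≤ 1) :
    ∃ z : Strip, (∀ i, (F^[i] z).1 ≠ 0) ∧ {i | F^[i] z ∈ U}.Infinite := by
  obtain ⟨V, hVm, hV0, hVU⟩ := exists_measurable_subset_proj_image hU hne
  have hrec := h.mp.conservative.frequently_ae_mem_and_frequently_image_mem
    hVm.nullMeasurableSet hV0
  have hax : ∀ᵐ z ∂area, ∀ i : ℕ, ((f^[i] z : annulus) : ℝ × ℝ).1 ≠ 0 := by
    rw [ae_all_iff]
    intro i
    have h0 : ∀ᵐ z ∂area, ((z : annulus) : ℝ × ℝ).1 ≠ 0 := by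
      rw [ae_iff]
      simpa using area_axis_eq_zero
    exact (h.mp.iterate i).quasiMeasurePreserving.ae h0
  obtain ⟨z, ⟨-, hz⟩, hz'⟩ := (hrec.and_eventually hax).exists
  have hne0 : ∀ (k : ℤ) (i : ℕ), (F^[i] (sh k (sec z))).1 ≠ 0 := by
    intro k i h0
    apply hz' i
    have : f^[i] z = proj (F^[i] (sh k (sec z))) := by
      rw [h.iterate_semiconj, proj_sh, proj_sec]
    rw [this]
    simp [proj, h0]
  let M : ℝ := (B + 1 + |x - (sec z).1|) / (2 * Real.pi)
  let T : Set ℤ := Icc (-⌈M⌉) ⌈M⌉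
  by_contra! hcon
  have hfin : (⋃ k ∈ T, {i | F^[i] (sh k (sec z)) ∈ U}).Finite :=
    (finite_Icc _ _).biUnion fun k _ => hcon _ (hne0 k)
  have hinf : {i | f^[i] z ∈ V}.Infinite := Nat.frequently_atTop_iff_infinite.1 hz
  refine hinf (hfin.subset fun i hi => ?_)
  obtain ⟨u, hu, hproj⟩ := hVU hi
  have : proj u = proj (F^[i] (sec z)) := by rw [hproj, h.iterate_semiconj, proj_sec]
  obtain ⟨k, hk⟩ := proj_eq_proj_iff.1 this
  simp only [mem_iUnion]
  refine ⟨k, ?_, ?_⟩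
  · have h1 := abs_le.1 (hB i (sec z))
    have h2 := abs_le.1 (hx u hu)
    have h3 : u.1 = (F^[i] (sec z)).1 + 2 * Real.pi * k := by rw [hk]; rfl
    have h4 := abs_le.1 (le_refl |x - (sec z).1|)
    have hpi := Real.two_pi_pos
    have hM : 2 * Real.pi * M = B + 1 + |x - (sec z).1| := by
      simp only [M]; field_simp
    have h5 := Int.le_ceil M
    constructor
    · have : -(⌈M⌉ : ℝ) ≤ k := by
        by_contra! hlt
        nlinarith
      exact_mod_cast this
    · have : (k : ℝ) ≤ ⌈M⌉ := by
        by_contra! hlt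
        nlinarith
      exact_mod_cast this
  · simp only [mem_ofPred_eq, h.iterate_shift, ← hk]
    exact hu

/-- If there are only finitely many odd-periodic points on the axis, all of them fixed, then the
displacements cannot be bounded for a lift of flux zero. -/
lemma false_of_bounded (h : IsRevLift f F) (hflux : flux F = 0) {B : ℝ}
    (hB : ∀ n, Odd n → ∀ p, |(F^[n] p).1 - p.1| ≤ B)
    (hfin : {c : Icc (1 : ℝ) 2 | (1 < (c : ℝ) ∧ (c : ℝ) < 2) ∧ F (0, c) = (0, c)}.Finite)
    (hper : ∀ n, Odd n → ∀ c : Icc (1 : ℝ) 2, F^[n] (0, c) = (0, c) → F (0, c) = (0, c)) :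
    False := by
  have hne : {c : Icc (1 : ℝ) 2 | (1 < (c : ℝ) ∧ (c : ℝ) < 2) ∧ F (0, c) = (0, c)}.Nonempty := by
    by_contra hempty
    have hno : ∀ c : Icc (1 : ℝ) 2, 1 < (c : ℝ) → (c : ℝ) < 2 → F (0, c) ≠ (0, c) :=
      fun c h1 h2 h3 => hempty ⟨c, ⟨h1, h2⟩, h3⟩
    rcases h.lev_dichotomy hno with h1 | h1
    · exact h1.2.ne' hflux
    · exact h1.2.ne hflux
  obtain ⟨q, ⟨⟨hq1, hq2⟩, hq⟩, hmin⟩ := hfin.exists_minimal hne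
  have hlow : ∀ y : Icc (1 : ℝ) 2, 1 < (y : ℝ) → y < q → F (0, y) ≠ (0, y) := by
    intro y h1 h2 h3
    have h4 : (y : ℝ) < q := h2
    exact absurd (hmin ⟨⟨h1, h4.trans hq2⟩, h3⟩ h2.le) (not_le.2 h2)
  obtain ⟨Λ, hΛ⟩ := h.twist
  have hFc := h.continuous
  have hpi := Real.pi_pos
  have hqn : ∀ n, F^[n] (0, q) = (0, q) := fun n => Function.iterate_fixed hq n
  let ψ : Strip → ℝ := fun z => ang q z + Λ (z, (0, q)) - ang q (F z)
  have hsum : ∀ (n : ℕ) (z : Strip), ∑ i ∈ Finset.range n, ψ (F^[i] z) =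
      ang q z + ∑ i ∈ Finset.range n, Λ (F^[i] z, F^[i] (0, q)) - ang q (F^[n] z) := by
    intro n z
    induction n with
    | zero => simp
    | succ n ih =>
      rw [Finset.sum_range_succ, ih, Finset.sum_range_succ, hqn]
      simp only [ψ, Function.iterate_succ_apply']
      ring
  have hbound : ∀ n, Odd n → ∀ z ∈ slit q, |∑ i ∈ Finset.range n, ψ (F^[i] z)| < 4 * Real.pi := by
    intro n hn z hz
    obtain ⟨j, hj, hjb, -⟩ := (h.iterate hn.pos).exists_turn_bounds
      (hΛ.iterate hFc h.injective h.exists_disp_bound n) (hqn n) hq1 hq2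
      (fun y h1 h2 h3 => hlow y h1 h2 (hper n hn y h3))
    have h1 := hjb z hz
    have h2 : -Real.pi < ang q (F^[n] z) := Complex.neg_pi_lt_arg _
    have h3 : ang q (F^[n] z) ≤ Real.pi := Complex.arg_le_pi _
    rw [hsum, abs_lt]
    rcases hj with rfl | rfl <;> push_cast at h1 <;> constructor <;> linarith [h1.1, h1.2]
  obtain ⟨σ, hσ, hσ0, U, hUo, hUne, x, hUx, hσU⟩ : ∃ σ : ℝ, |σ| = 1 ∧
      (∀ z ∈ slit q, 0 ≤ σ * ψ z) ∧ ∃ U : Set Strip, IsOpen U ∧ U.Nonempty ∧ ∃ x : ℝ,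
        (∀ u ∈ U, |u.1 - x| ≤ 1) ∧ ∀ z ∈ U, 2 * Real.pi ≤ σ * ψ z := by
    obtain ⟨j, hj, hjb, z₁, hz₁, hj₁, hF₁⟩ := h.exists_turn_bounds hΛ hq hq1 hq2 hlow
    have hint : ∀ z ∈ slit q, ∃ k : ℤ, ψ z = 2 * Real.pi * k := by
      intro z hz
      obtain ⟨k, hk⟩ := hΛ.exists_int h.injective hq (ne_of_mem_slit hz)
      exact ⟨k, by simp only [ψ, hk]; ring⟩
    let O : Set Strip := slit q ∩ (fun z => ang q z + Λ (z, (0, q))) ⁻¹'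
      Ioo (2 * Real.pi * j) (2 * Real.pi * j + 2 * Real.pi) ∩ {z | |z.1 - z₁.1| < 1}
    have hO : IsOpen O :=
      ((hΛ.continuousOn_turn q).isOpen_inter_preimage (isOpen_slit q) isOpen_Ioo).inter
        (isOpen_lt (by fun_prop) continuous_const)
    have hzO : z₁ ∈ O :=
      ⟨⟨hz₁, by simp only [mem_preimage, hj₁]; constructor <;> linarith⟩, by simp⟩
    have hcl : ∀ S : Set ℝ, (0 : ℝ) ∈ closure S → (O ∩ {z | (F z).1 ∈ S}).Nonempty := by
      intro S hS
      have hW : IsOpen ((fun t : ℝ => rf (F (rf (t, (F z₁).2)))) ⁻¹' O) := by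
        refine hO.preimage ?_
        have := continuous_rf
        fun_prop
      have h0 : (0 : ℝ) ∈ (fun t : ℝ => rf (F (rf (t, (F z₁).2)))) ⁻¹' O := by
        have : ((0, (F z₁).2) : Strip) = F z₁ := Prod.ext hF₁.symm rfl
        simp only [mem_preimage, this, h.rev']
        exact hzO
      obtain ⟨t, ht, htS⟩ := mem_closure_iff.1 hS _ hW h0
      refine ⟨_, ht, ?_⟩
      simp only [mem_ofPred_eq, h.rev]
      exact htS
    rcases hj with rfl | rfl
    · refine ⟨1, by simp, fun z hz => ?_, O ∩ {z | (F z).1 ∈ Ioi 0},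
        hO.inter (isOpen_Ioi.preimage (by fun_prop)), hcl _ (by rw [closure_Ioi]; simp), z₁.1,
        fun u hu => (le_of_lt hu.1.2), fun z hz => ?_⟩
      · obtain ⟨k, hk⟩ := hint z hz
        have h1 := (hjb z hz).1
        have h3 : ang q (F z) ≤ Real.pi := Complex.arg_le_pi _
        have h4 : -(2 * Real.pi) < ψ z := by simp only [ψ]; push_cast at h1; linarith
        rw [hk] at h4
        have h5 : (-1 : ℝ) < k := by by_contra! hle; nlinarith
        have h6 : 0 ≤ k := by
          have : -1 < k := by exact_mod_cast h5
          omega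
        rw [hk]
        have : (0 : ℝ) ≤ k := by exact_mod_cast h6
        positivity
      · obtain ⟨k, hk⟩ := hint z hz.1.1.1
        have h1 := hz.1.1.2.1
        have h3 : ang q (F z) < 0 := ang_neg hz.2
        have h4 : 0 < ψ z := by simp only [ψ]; push_cast at h1; linarith
        rw [hk] at h4
        have h5 : (0 : ℝ) < k := by by_contra! hle; nlinarith
        have h6 : 1 ≤ k := by exact_mod_cast h5
        have h7 : (1 : ℝ) ≤ k := by exact_mod_cast h6
        rw [hk]
        nlinarith
    · refine ⟨-1, by simp, fun z hz => ?_, O ∩ {z | (F z).1 ∈ Iio 0},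
        hO.inter (isOpen_Iio.preimage (by fun_prop)), hcl _ (by rw [closure_Iio]; simp), z₁.1,
        fun u hu => (le_of_lt hu.1.2), fun z hz => ?_⟩
      · obtain ⟨k, hk⟩ := hint z hz
        have h1 := (hjb z hz).2
        have h3 : -Real.pi < ang q (F z) := Complex.neg_pi_lt_arg _
        have h4 : ψ z < 2 * Real.pi := by simp only [ψ]; push_cast at h1; linarith
        rw [hk] at h4
        have h5 : (k : ℝ) < 1 := by by_contra! hle; nlinarith
        have h6 : k ≤ 0 := by
          have : k < 1 := by exact_mod_cast h5
          omega
        rw [hk]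
        have : (k : ℝ) ≤ 0 := by exact_mod_cast h6
        nlinarith
      · obtain ⟨k, hk⟩ := hint z hz.1.1.1
        have h1 := hz.1.1.2.2
        have h3 : 0 < ang q (F z) := ang_pos hz.2
        have h4 : ψ z < 0 := by simp only [ψ]; push_cast at h1; linarith
        rw [hk] at h4
        have h5 : (k : ℝ) < 0 := by by_contra! hle; nlinarith
        have h6 : k ≤ -1 := by
          have : k < 0 := by exact_mod_cast h5
          omega
        have h7 : (k : ℝ) ≤ -1 := by exact_mod_cast h6
        rw [hk]
        nlinarith
  obtain ⟨D, hD⟩ := h.exists_disp_bound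
  have hB' : ∀ n p, |(F^[n] p).1 - p.1| ≤ B + D := by
    intro n p
    have hD0 : 0 ≤ D := (abs_nonneg _).trans (hD p)
    rcases Nat.even_or_odd n with hn | hn
    · have h1 := abs_le.1 (hB (n + 1) hn.add_one p)
      have h2 := abs_le.1 (hD (F^[n] p))
      have h3 : F^[n + 1] p = F (F^[n] p) := Function.iterate_succ_apply' F n p
      rw [h3] at h1
      rw [abs_le]
      constructor <;> linarith
    · linarith [hB n hn p]
  obtain ⟨z, hz, hinf⟩ := h.exists_recurrent_orbit hB' hUo hUne hUx
  have hzs : ∀ i, F^[i] z ∈ slit q := fun i => mem_slit_iff.2 (Or.inl (hz i))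
  obtain ⟨s, hsub, hcard⟩ := hinf.exists_subset_card_eq 2
  obtain ⟨N, hN⟩ := s.exists_nat_subset_range
  have h1 := hbound (2 * N + 1) (odd_two_mul_add_one N) z (hzs 0)
  have h2 : 4 * Real.pi ≤ σ * ∑ i ∈ Finset.range (2 * N + 1), ψ (F^[i] z) := by
    rw [Finset.mul_sum]
    have hs : s ⊆ Finset.range (2 * N + 1) :=
      hN.trans (Finset.range_subset_range.2 (by omega))
    refine le_trans ?_ (Finset.sum_le_sum_of_subset_of_nonneg hs
      (fun i _ _ => hσ0 _ (hzs i)))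
    refine le_trans (le_of_eq ?_) (Finset.sum_le_sum (fun i hi => hσU _ (hsub hi)))
    rw [Finset.sum_const, hcard]
    simp; ring
  have h3 := le_abs_self (σ * ∑ i ∈ Finset.range (2 * N + 1), ψ (F^[i] z))
  rw [abs_mul, hσ, one_mul] at h3
  linarith

end IsRevLift

/-- The interior points of the axis which an odd iterate of `F` moves by a deck transformation. -/
def oddAxis (F : Strip → Strip) : Set (Icc (1 : ℝ) 2) :=
  {c | (1 < (c : ℝ) ∧ (c : ℝ) < 2) ∧ ∃ n, Odd n ∧ ∃ k : ℤ, F^[n] (0, c) = sh k (0, c)}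

namespace IsRevLift

variable {f : annulus → annulus} {F : Strip → Strip}

lemma iterate_mul_of_eq_sh (h : IsRevLift f F) {n : ℕ} {a : ℤ} {p : Strip}
    (hp : F^[n] p = sh a p) (m : ℕ) : F^[n * m] p = sh (m * a) p := by
  induction m with
  | zero => simp
  | succ m ih =>
    rw [Nat.mul_succ, Function.iterate_add_apply, hp, h.iterate_shift, ih, sh_sh]
    congr 1
    push_cast; ring

lemma infinite_of_eventually (h : IsRevLift f F) {N : ℕ}
    (hN : ∀ n, Odd n → N < n → ∃ c : Icc (1 : ℝ) 2, (1 < (c : ℝ) ∧ (c : ℝ) < 2) ∧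
      F^[n] (0, c) = sh 1 (0, c)) : (oddAxis F).Infinite := by
  have hodd : ∀ i, Odd (2 * (N + i) + 1) := fun i => odd_two_mul_add_one _
  choose c hc hFc using fun i : ℕ => hN (2 * (N + i) + 1) (hodd i) (by omega)
  refine infinite_of_injective_forall_mem (f := c) (fun i j hij => ?_)
    (fun i => ⟨hc i, _, hodd i, 1, hFc i⟩)
  have h1 := h.iterate_mul_of_eq_sh (hFc i) (2 * (N + j) + 1)
  have h2 := h.iterate_mul_of_eq_sh (hFc j) (2 * (N + i) + 1)
  rw [← hij, mul_comm, h1, sh_eq_sh_iff] at h2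
  push_cast at h2
  omega

lemma oddAxis_inv_subset (h : IsRevLift f F) : oddAxis (rf ∘ F ∘ rf) ⊆ oddAxis F := by
  rintro c ⟨hc, n, hn, k, hk⟩
  refine ⟨hc, n, hn, -k, ?_⟩
  have h1 : Function.RightInverse (rf ∘ F ∘ rf) F := h.rev
  have h2 := h1.iterate n (0, c)
  rw [hk, h.iterate_shift] at h2
  rw [← sh_injective k |>.eq_iff, h2, sh_sh]
  simp

/-- A lift of an iterate, moved back by one period, without interior fixed points on the axis. -/
lemma lev_dichotomy_iterate (h : IsRevLift f F) {n : ℕ} (hn : Odd n)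
    (hno : ¬ ∃ c : Icc (1 : ℝ) 2, (1 < (c : ℝ) ∧ (c : ℝ) < 2) ∧ F^[n] (0, c) = sh 1 (0, c)) :
    ((∀ p, lev p + 1 ≤ lev (F^[n] p)) ∧ area.real univ < n * flux F) ∨
      ((∀ p, lev (F^[n] p) ≤ lev p + 1) ∧ n * flux F < area.real univ) := by
  have hG := (h.iterate hn.pos).sh_comp (-1)
  have hflux : flux (sh (-1) ∘ F^[n]) = n * flux F - area.real univ := by
    rw [(h.iterate hn.pos).flux_sh_comp, h.flux_iterate hn.pos]
    push_cast; ring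
  have hdich := hG.lev_dichotomy fun c h1 h2 h3 => hno ⟨c, ⟨h1, h2⟩, by
    have := congrArg (sh 1) h3
    simpa [sh_sh] using this⟩
  rw [hflux] at hdich
  rcases hdich with ⟨h1, h2⟩ | ⟨h1, h2⟩
  · refine Or.inl ⟨fun p => ?_, by linarith⟩
    have := h1 p
    simp at this
    omega
  · refine Or.inr ⟨fun p => ?_, by linarith⟩
    have := h1 p
    simp at this
    omega

lemma infinite_of_flux_pos (h : IsRevLift f F) {z : Strip} (hz : F z = z) (hflux : 0 < flux F) :
    (oddAxis F).Infinite := by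
  obtain ⟨N, hN⟩ := exists_nat_gt (area.real univ / flux F)
  rw [div_lt_iff₀ hflux] at hN
  refine h.infinite_of_eventually (N := N) fun n hn hNn => ?_
  by_contra hno
  rcases h.lev_dichotomy_iterate hn hno with ⟨h1, -⟩ | ⟨-, h2⟩
  · have := h1 z
    rw [Function.iterate_fixed hz] at this
    omega
  · have : (N : ℝ) ≤ n := by exact_mod_cast hNn.le
    nlinarith

lemma infinite_of_large_displacement (h : IsRevLift f F) (hflux : flux F = 0) {n : ℕ}
    (hn : Odd n) {p : Strip} (hp : 4 * Real.pi < (F^[n] p).1 - p.1) : (oddAxis F).Infinite := by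
  have hdich : ∀ m, Odd m →
      (¬ ∃ c : Icc (1 : ℝ) 2, (1 < (c : ℝ) ∧ (c : ℝ) < 2) ∧ F^[m] (0, c) = sh 1 (0, c)) →
      ∀ p, lev (F^[m] p) ≤ lev p + 1 := by
    intro m hm hno
    rcases h.lev_dichotomy_iterate hm hno with ⟨-, h2⟩ | ⟨h1, -⟩
    · have := area_univ_pos
      rw [hflux, mul_zero] at h2
      linarith
    · exact h1
  obtain ⟨c, -, hw⟩ : ∃ c : Icc (1 : ℝ) 2, (1 < (c : ℝ) ∧ (c : ℝ) < 2) ∧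
      F^[n] (0, c) = sh 1 (0, c) := by
    by_contra hno
    have h1 : lev (F^[n] p) < lev p + 2 := by have := hdich n hn hno p; omega
    rw [lev_lt_iff] at h1
    have h2 : 2 * Real.pi * lev p ≤ p.1 := le_lev_iff.1 le_rfl
    push_cast at h1
    linarith
  refine h.infinite_of_eventually (N := n) fun m hm hnm => ?_
  by_contra hno
  have h1 := hdich m hm hno
  have h2 : ∀ i : ℕ, lev (F^[m * i] (0, c)) ≤ lev (0, c) + i := by
    intro i
    induction i with
    | zero => simp
    | succ i ih =>
      have := h1 (F^[m * i] (0, c))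
      rw [← Function.iterate_add_apply, add_comm, ← Nat.mul_succ] at this
      push_cast
      simp only [Nat.succ_eq_add_one] at this
      omega
  have h3 := h2 n
  rw [mul_comm, h.iterate_mul_of_eq_sh hw, lev_sh] at h3
  omega

lemma infinite_of_bounded (h : IsRevLift f F) (hflux : flux F = 0) {B : ℝ}
    (hB : ∀ n, Odd n → ∀ p, |(F^[n] p).1 - p.1| ≤ B) : (oddAxis F).Infinite := by
  intro hfin
  let P : Set (Icc (1 : ℝ) 2) := {c | ∃ n, Odd n ∧ F^[n] (0, c) = (0, c)}
  have hPsub : P ⊆ oddAxis F ∪ {⟨1, by norm_num⟩, ⟨2, by norm_num⟩} := by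
    rintro c ⟨n, hn, hc⟩
    rcases eq_or_lt_of_le c.2.1 with h1 | h1
    · exact Or.inr (Or.inl (Subtype.ext h1.symm))
    rcases eq_or_lt_of_le c.2.2 with h2 | h2
    · exact Or.inr (Or.inr (Subtype.ext h2))
    · exact Or.inl ⟨⟨h1, h2⟩, n, hn, 0, by simpa using hc⟩
  have hP : P.Finite := (hfin.union (toFinite _)).subset hPsub
  choose! ν hνo hν using fun (c : Icc (1 : ℝ) 2) (hc : c ∈ P) => hc
  set N := ∏ c ∈ hP.toFinset, ν c with hNdef
  have hNo : Odd N := by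
    refine Finset.prod_induction _ _ (fun a b => Odd.mul) odd_one fun c hc => ?_
    exact hνo c (hP.mem_toFinset.1 hc)
  have hNfix : ∀ c ∈ P, F^[N] (0, c) = (0, c) := by
    intro c hc
    obtain ⟨d, hd⟩ := Finset.dvd_prod_of_mem ν (hP.mem_toFinset.2 hc)
    rw [hNdef, hd, Function.iterate_mul]
    exact Function.iterate_fixed (hν c hc) d
  refine (h.iterate hNo.pos).false_of_bounded (B := B) ?_ ?_ ?_ ?_
  · rw [h.flux_iterate hNo.pos, hflux, mul_zero]
  · intro n hn p
    rw [← Function.iterate_mul]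
    exact hB _ (hNo.mul hn) p
  · refine hfin.subset ?_
    rintro c ⟨h1, h2⟩
    exact ⟨h1, N, hNo, 0, by simpa using h2⟩
  · intro n hn c hc
    rw [← Function.iterate_mul] at hc
    exact hNfix c ⟨_, hNo.mul hn, hc⟩

theorem infinite_oddAxis (h : IsRevLift f F) {z : Strip} (hz : F z = z) :
    (oddAxis F).Infinite := by
  have hinv : (oddAxis (rf ∘ F ∘ rf)).Infinite → (oddAxis F).Infinite :=
    fun hi => hi.mono h.oddAxis_inv_subset
  rcases lt_trichotomy (flux F) 0 with h0 | h0 | h0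
  · refine hinv (h.inv.infinite_of_flux_pos (z := rf z) (by simp [hz]) ?_)
    rw [h.flux_inv]
    linarith
  · by_cases hB : ∀ n, Odd n → ∀ p, |(F^[n] p).1 - p.1| ≤ 4 * Real.pi
    · exact h.infinite_of_bounded h0 hB
    · push Not at hB
      obtain ⟨n, hn, p, hp⟩ := hB
      rcases lt_abs.1 hp with hp | hp
      · exact h.infinite_of_large_displacement h0 hn hp
      · refine hinv (h.inv.infinite_of_large_displacement (p := rf p) ?_ hn ?_)
        · rw [h.flux_inv, h0, neg_zero]
        · have h2 : rf (F^[n] p) = (rf ∘ F ∘ rf)^[n] (rf p) :=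
            (Function.Semiconj.iterate_right (f := rf) (fun q => by simp) n) p
          rw [← h2]
          simp only [rf_fst]
          linarith
  · exact h.infinite_of_flux_pos hz h0

end IsRevLift

/-! ### Lifting an isotopy -/

/-- An isotopy of the annulus lifts to the strip. -/
lemma exists_lift_isotopy {H : unitInterval × annulus → annulus} (hH : Continuous H)
    (hinj : ∀ s, Function.Injective fun z => H (s, z)) (h0 : ∀ z, H (0, z) = z) :
    ∃ K : unitInterval × Strip → Strip, Continuous K ∧ (∀ p, K (0, p) = p) ∧
      (∀ s p, proj (K (s, p)) = H (s, proj p)) ∧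
      (∀ s k p, K (s, sh k p) = sh k (K (s, p))) ∧
      (∀ s, Function.Injective fun p => K (s, p)) ∧
      ∃ A : ℝ, ∀ s p, |(K (s, p)).1 - p.1| ≤ A := by
  let R : unitInterval × annulus → ℂ := fun y => pol (H y) / pol y.2
  have hR : Continuous R := by
    refine Continuous.div ?_ ?_ fun y => pol_ne_zero _
    · exact continuous_pol.comp (continuous_subtype_val.comp hH)
    · exact continuous_pol.comp (continuous_subtype_val.comp continuous_snd)
  obtain ⟨a, hac, ha0, haR⟩ := exists_angle_lift R hR
    (fun y => div_ne_zero (pol_ne_zero _) (pol_ne_zero _))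
    (fun z => by simp only [R, h0]; exact div_self (pol_ne_zero _))
  let K : unitInterval × Strip → Strip := fun y =>
    (y.2.1 + a (y.1, proj y.2), ⟨enorm2 (H (y.1, proj y.2)), (H (y.1, proj y.2)).2⟩)
  have hproj : ∀ s p, proj (K (s, p)) = H (s, proj p) := by
    intro s p
    apply Subtype.ext
    apply pol_injective
    rw [pol_proj]
    have hne := pol_ne_zero (proj p)
    have h1 : pol (H (s, proj p)) = pol (proj p) * R (s, proj p) := by
      simp only [R]; field_simp
    have h2 : ‖pol (H (s, proj p))‖ = p.2 * ‖R (s, proj p)‖ := by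
      rw [h1, norm_mul, norm_pol, enorm2_proj]
    simp only [K, ← norm_pol]
    rw [h2, h1, pol_proj]
    conv_rhs => rw [haR]
    push_cast
    rw [add_mul, Complex.exp_add]
    ring
  have hsh : ∀ s k p, K (s, sh k p) = sh k (K (s, p)) := by
    intro s k p
    refine Prod.ext ?_ ?_
    · simp [K]; ring
    · simp [K]
  refine ⟨K, ?_, ?_, hproj, hsh, ?_, ?_⟩
  · have hp := continuous_proj
    refine Continuous.prodMk (by fun_prop) (Continuous.subtype_mk ?_ _)
    exact continuous_enorm2.comp (continuous_subtype_val.comp (by fun_prop))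
  · intro p
    refine Prod.ext ?_ (Subtype.ext ?_)
    · simp [K, ha0]
    · simp [K, h0, enorm2_proj]
  · intro s p p' hpp
    have h1 : proj (K (s, p)) = proj (K (s, p')) := congrArg proj hpp
    rw [hproj, hproj] at h1
    obtain ⟨k, hk⟩ := proj_eq_proj_iff.1 (hinj s h1)
    simp only [hk, hsh] at hpp
    have : k = 0 := sh_eq_sh_iff.1 (hpp.trans (sh_zero _).symm)
    rw [hk, this, sh_zero]
  · obtain ⟨A, hA⟩ := (isCompact_univ.image (continuous_abs.comp hac)).bddAbove
    refine ⟨A, fun s p => ?_⟩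
    have := hA ⟨(s, proj p), mem_univ _, rfl⟩
    simpa [K] using this

/-- Pairs of distinct points of the strip. -/
abbrev StripOffDiag : Type := {y : Strip × Strip // y.1 ≠ y.2}

/-- The time-one map of an isotopy of the strip with bounded displacements has a twist function. -/
lemma exists_isTwist {K : unitInterval × Strip → Strip} (hK : Continuous K)
    (hK0 : ∀ p, K (0, p) = p) (hinj : ∀ s, Function.Injective fun p => K (s, p)) {A : ℝ}
    (hA : ∀ s p, |(K (s, p)).1 - p.1| ≤ A) : ∃ Λ, IsTwist (fun p => K (1, p)) Λ := by
  let R : unitInterval × StripOffDiag → ℂ := fun u =>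
    (cx (K (u.1, u.2.1.1)) - cx (K (u.1, u.2.1.2))) / (cx u.2.1.1 - cx u.2.1.2)
  have hcx := continuous_cx
  have hne : ∀ y : StripOffDiag, cx y.1.1 - cx y.1.2 ≠ 0 := fun y => sub_ne_zero.2 (cx_injective.ne y.2)
  have hneK : ∀ s (y : StripOffDiag), cx (K (s, y.1.1)) - cx (K (s, y.1.2)) ≠ 0 :=
    fun s y => sub_ne_zero.2 (cx_injective.ne ((hinj s).ne y.2))
  have hR : Continuous R := Continuous.div (by fun_prop) (by fun_prop) fun u => hne u.2
  have hR0 : ∀ u, R u ≠ 0 := fun u => div_ne_zero (hneK _ _) (hne _)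
  obtain ⟨b, hbc, hb0, hbR⟩ := exists_angle_lift R hR hR0
    (fun y => by simp only [R, hK0]; exact div_self (hne y))
  have hbcs : ∀ y : StripOffDiag, Continuous fun s => b (s, y) := fun y => by fun_prop
  classical
  let Λ : Strip × Strip → ℝ := fun y => if h : y.1 ≠ y.2 then b (1, ⟨y, h⟩) else 0
  have hΛ : ∀ p q (h : p ≠ q), Λ (p, q) = b (1, ⟨(p, q), h⟩) := by
    intro p q h
    simp [Λ, h]
  refine ⟨Λ, ?_, ?_, ?_, 2 * A, ?_⟩
  · rw [continuousOn_iff_continuous_domRestrict]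
    have : ({p : Strip × Strip | p.1 ≠ p.2}).domRestrict Λ = fun y => b (1, y) := by
      funext y
      exact hΛ y.1.1 y.1.2 y.2
    rw [this]
    fun_prop
  · intro p q hpq
    rw [hΛ p q hpq, hΛ q p hpq.symm]
    have hRR : ∀ s, R (s, ⟨(p, q), hpq⟩) = R (s, ⟨(q, p), hpq.symm⟩) := by
      intro s
      simp only [R]
      rw [← neg_sub (cx (K (s, q))), ← neg_sub (cx q), neg_div_neg_eq]
    refine congrFun (angle_lift_unique (hbcs ⟨(p, q), hpq⟩) (hbcs ⟨(q, p), hpq.symm⟩)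
      (by simp [hb0]) fun s => ?_) 1
    refine exp_angle_eq_of_norm_mul_eq (norm_pos_iff.2 (hR0 _))
      (norm_pos_iff.2 (hR0 (s, ⟨(q, p), hpq.symm⟩))) (hbR (s, ⟨(p, q), hpq⟩)) ?_
    rw [hRR]
    exact hbR _
  · intro p q hpq
    refine ⟨‖R (1, ⟨(p, q), hpq⟩)‖, norm_pos_iff.2 (hR0 _), ?_⟩
    rw [hΛ p q hpq, ← hbR]
    have := hne ⟨(p, q), hpq⟩
    simp only [R]
    simp only at this
    field_simp
  · intro p q hpq
    have hA0 : 0 ≤ A := (abs_nonneg _).trans (hA 0 p)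
    have hpq' : p ≠ q := by
      rintro rfl
      simp at hpq
      linarith
    have hre : ∀ s, 0 < (cx (K (s, p)) - cx (K (s, q))).re := by
      intro s
      have h1 := abs_le.1 (hA s p)
      have h2 := abs_le.1 (hA s q)
      simp [cx]
      linarith
    have hre0 : 0 < (cx p - cx q).re := by simpa [hK0] using hre 0
    let c : unitInterval → ℝ := fun s =>
      Complex.arg (cx (K (s, p)) - cx (K (s, q))) - Complex.arg (cx p - cx q)
    have hc : Continuous c := by
      refine Continuous.sub ?_ continuous_const
      rw [continuous_iff_continuousAt]
      intro s
      refine ContinuousAt.comp (f := fun s => cx (K (s, p)) - cx (K (s, q))) (g := Complex.arg) ?_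
        (by fun_prop)
      exact Complex.continuousAt_arg (Or.inl (hre s))
    have hcb : c = fun s => b (s, ⟨(p, q), hpq'⟩) := by
      refine angle_lift_unique hc (hbcs _) (by simp [c, hK0, hb0]) fun s => ?_
      have hn0 := hne ⟨(p, q), hpq'⟩
      have hn1 := hneK s ⟨(p, q), hpq'⟩
      refine exp_angle_eq_of_norm_mul_eq (z := R (s, ⟨(p, q), hpq'⟩))
        (div_pos (norm_pos_iff.2 hn1) (norm_pos_iff.2 hn0)) (norm_pos_iff.2 (hR0 _)) ?_ (hbR _)
      simp only [R, c]
      push_cast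
      rw [sub_mul, Complex.exp_sub, div_mul_div_comm, Complex.norm_mul_exp_arg_mul_I,
        Complex.norm_mul_exp_arg_mul_I]
    have := congrFun hcb 1
    simp only [c] at this
    rw [hΛ p q hpq', ← this]
    ring

lemma exists_isRevLift (f : annulus ≃ₜ annulus)
    (hrev : ∀ z : annulus, f (IA z) = IA (f.symm z)) (harea : MeasurePreserving f area area)
    (hiso : IsotopicToId f) : ∃ F, IsRevLift f F := by
  obtain ⟨H, hH, he, hH0, hH1⟩ := hiso
  obtain ⟨K, hK, hK0, hKp, hKs, hKi, A, hA⟩ := exists_lift_isotopy (H := H) hH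
    (fun s => by
      obtain ⟨e, he⟩ := he s
      simp only [he]
      exact e.injective) hH0
  let F : Strip → Strip := fun p => K (1, p)
  have hFc : Continuous F := by fun_prop
  have hFp : ∀ p, proj (F p) = f (proj p) := fun p => (hKp 1 p).trans (hH1 _)
  have hFs : ∀ k p, F (sh k p) = sh k (F p) := fun k p => hKs 1 k p
  have hIA : ∀ z, IA (IA z) = z := fun z => by apply Subtype.ext; simp [IA, refl2]
  have hdeck : ∀ p, ∃ k : ℤ, F (rf (F (rf p))) = sh k p := by
    intro p
    rw [← proj_eq_proj_iff]
    simp [hFp, hrev, hIA]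
  have hrfc := continuous_rf
  obtain ⟨m, hm⟩ := hdeck (0, ⟨1, by norm_num⟩)
  have hconst : ∀ p, F (rf (F (rf p))) = sh m p := by
    intro p
    have hpre : IsPreconnected (univ : Set Strip) := by
      rw [← univ_prod_univ]
      exact isPreconnected_univ.prod (IsRevLift.isPreconnected_of_ordConnected ordConnected_univ)
    have := eq_of_isPreconnected_of_discrete hpre (a := 0)
      (b := fun p => (F (rf (F (rf p)))).1 - p.1) (by fun_prop)
      (fun p _ => by
        obtain ⟨k, hk⟩ := hdeck p
        exact ⟨k, by simp [hk]⟩) (mem_univ p) (mem_univ (0, ⟨1, by norm_num⟩))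
    obtain ⟨k, hk⟩ := hdeck p
    simp only [hm, hk, sh_fst, add_sub_cancel_left] at this
    have hkm : (k : ℝ) = m := mul_left_cancel₀ Real.two_pi_pos.ne' this
    rw [hk, show k = m by exact_mod_cast hkm]
  have hm0 : m = 0 := by
    set p : Strip := (0, ⟨1, by norm_num⟩)
    have h1 := hconst (F p)
    have h2 : rf (F (rf (F p))) = sh (-m) p := by
      have := congrArg rf (hconst (rf p))
      rwa [rf_rf, rf_sh, rf_rf] at this
    rw [h2, hFs, sh_eq_sh_iff] at h1
    omega
  refine ⟨F, hFc, hFp, hFs, fun p => ?_, harea, exists_isTwist hK hK0 hKi hA⟩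
  rw [hconst, hm0, sh_zero]

/-- **Theorem 1.3 (first part).** An area preserving reversible homeomorphism of
the closed annulus isotopic to the identity with an odd-periodic point has
infinitely many interior symmetric odd-periodic points. -/
theorem infinitely_many_symmetric_odd_periodic_closed_annulus
    (f : annulus ≃ₜ annulus)
    (hrev : ∀ z : annulus, f (IA z) = IA (f.symm z))
    (harea : MeasurePreserving f
      ((volume : Measure (ℝ × ℝ)).comap (Subtype.val : annulus → ℝ × ℝ))
      ((volume : Measure (ℝ × ℝ)).comap (Subtype.val : annulus → ℝ × ℝ)))
    (hiso : IsotopicToId f)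
    (hodd : ∃ (z : annulus) (k : ℕ), Odd k ∧ 1 ≤ k ∧ (⇑f)^[k] z = z) :
    {z : annulus | (z : ℝ × ℝ) ∈ annulusInt ∧
        (∃ k : ℕ, Odd k ∧ 1 ≤ k ∧ (⇑f)^[k] z = z) ∧
        (∃ l : ℕ, 1 ≤ l ∧ (⇑f)^[l] z = IA z)}.Infinite := by
  obtain ⟨F, h⟩ := exists_isRevLift f hrev harea hiso
  obtain ⟨z, k, hk, hk1, hz⟩ := hodd
  have hlift := h.iterate hk1
  obtain ⟨m, hm⟩ : ∃ m : ℤ, F^[k] (sec z) = sh m (sec z) := by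
    rw [← proj_eq_proj_iff, hlift.semiconj, proj_sec, hz]
  have hG := hlift.sh_comp (-m)
  have hinf := hG.infinite_oddAxis (z := sec z) (by simp [hm, sh_sh])
  have hmap : InjOn (fun c : Icc (1 : ℝ) 2 => proj (0, c)) (oddAxis (sh (-m) ∘ F^[k])) := by
    intro c _ d _ hcd
    apply Subtype.ext
    have := congrArg (fun z : annulus => enorm2 z) hcd
    simpa [enorm2_proj] using this
  refine (hinf.image hmap).mono ?_
  rintro _ ⟨c, ⟨hc, n, hn, j, hj⟩, rfl⟩
  have hfix : (⇑f)^[k * n] (proj (0, c)) = proj (0, c) := by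
    rw [Function.iterate_mul, ← hG.iterate_semiconj, hj, proj_sh]
  have hodd : Odd (k * n) := hk.mul hn
  have hIA : IA (proj (0, c)) = proj (0, c) := by rw [← proj_rf, rf_axis]
  refine ⟨?_, ⟨_, hodd, hodd.pos, hfix⟩, _, hodd.pos, by rw [hfix, hIA]⟩
  simp only [annulusInt, mem_ofPred_eq, enorm2_proj]
  exact hc
end
end
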